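/- arXiv:2003.11261 — 4 statements merged into one kernel-verified Lean document; each statement's English description precedes it below -/
import Mathlib

section
/- Let A be an abelian category and U ⊆ A a non-empty full subcategory closed under kernels, cokernels, and extensions. Assume that for any epimorphism A ↠ U in A with U ∈ U there exists a morphism V → A with V ∈ U such that the composite V → A → U is an epimorphism. Then for every cochain complex K in A that is bounded above and has all cohomology objects in U, there exists a bounded above complex L with all components in U and a quasi-isomorphism L → K. -/
open CategoryTheory CategoryTheory.Limits

/-!
Truncating, we may replace `K` by a chain complex indexed by `ℕ` and build `L` and `φ : L ⟶ K`
degree by degree. In degree `n` we keep track of the cycles `Z ⊆ Lₙ`, which lie in `P` and map onto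
`Hₙ(K)`. The boundaries in `Lₙ` have to be the kernel of `Z ⟶ Hₙ(K)`, which lies in `P` again and
maps to boundaries of `K`, so the lifting property yields `V` in `P` mapping onto it together with a
compatible map `V ⟶ Kₙ₊₁`. Adding to `V` an object `W` of `P` which consists of cycles and covers
`Hₙ₊₁(K)` gives `Lₙ₊₁ := V ⊞ W`.
-/

section ObjectProperty

variable {C : Type*} [Category C] (P : ObjectProperty C)

lemma isClosedUnderKernels_of_prop_kernel [HasZeroMorphisms C] [HasKernels C]
    [P.IsClosedUnderIsomorphisms]
    (hP : ∀ {X Y : C} (f : X ⟶ Y), P X → P Y → P (kernel f)) : P.IsClosedUnderKernels where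
  kernels_le := by
    rintro _ ⟨f, k, hk, hX, hY⟩
    exact P.prop_of_iso ((kernelIsKernel f).conePointUniqueUpToIso hk) (hP f hX hY)

lemma isClosedUnderIsomorphisms_of_isClosedUnderKernels [HasZeroMorphisms C]
    [P.IsClosedUnderKernels] : P.IsClosedUnderIsomorphisms where
  of_iso {X Y} e hX :=
    P.prop_of_isLimit_kernelFork
      (KernelFork.IsLimit.ofι (f := (0 : X ⟶ X)) e.inv comp_zero (fun g _ ↦ g ≫ e.hom)
        (by simp) (by rintro _ _ _ _ rfl; simp)) hX hX

lemma isClosedUnderBinaryProducts_of_isClosedUnderExtensions [Preadditive C] [HasZeroObject C]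
    [HasBinaryBiproducts C] [P.IsClosedUnderIsomorphisms] [P.IsClosedUnderExtensions] :
    P.IsClosedUnderBinaryProducts where
  limitsOfShape_le := by
    rintro X ⟨p⟩
    have isLimit := (IsLimit.postcomposeHomEquiv (diagramIsoPair p.diag) _).2 p.isLimit
    exact P.prop_of_iso ((BinaryBiproduct.isLimit _ _).conePointUniqueUpToIso isLimit)
      (P.prop_biprod (p.prop_diag_obj (.mk .left)) (p.prop_diag_obj (.mk .right)))

/-- Every epimorphism onto an object satisfying `P` is dominated by an epimorphism from an object
satisfying `P`. -/
def RefinesEpis : Prop :=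
  ∀ ⦃B U : C⦄ (p : B ⟶ U), Epi p → P U → ∃ (V : C) (v : V ⟶ B), P V ∧ Epi (v ≫ p)

end ObjectProperty

section Exactness

variable {C : Type*} [Category C]

lemma exact_epi_comp [HasZeroMorphisms C] [CategoryWithHomology C] {W X Y Z : C}
    (p : W ⟶ X) [Epi p] {f : X ⟶ Y} {g : Y ⟶ Z} {w : f ≫ g = 0}
    (h : (ShortComplex.mk f g w).Exact) :
    (ShortComplex.mk (p ≫ f) g (by rw [Category.assoc, w, comp_zero])).Exact := by
  let ψ : ShortComplex.mk (p ≫ f) g (by rw [Category.assoc, w, comp_zero]) ⟶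
      ShortComplex.mk f g w := { τ₁ := p, τ₂ := 𝟙 Y, τ₃ := 𝟙 Z }
  have : Epi ψ.τ₁ := ‹Epi p›
  have : IsIso ψ.τ₂ := inferInstanceAs (IsIso (𝟙 Y))
  have : Mono ψ.τ₃ := inferInstanceAs (Mono (𝟙 Z))
  exact (ShortComplex.exact_iff_of_epi_of_isIso_of_mono ψ).2 h

lemma exact_comp_mono [HasZeroMorphisms C] [CategoryWithHomology C] {X Y Z W : C}
    {f : X ⟶ Y} {g : Y ⟶ Z} (i : Z ⟶ W) [Mono i] {w : f ≫ g = 0}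
    (h : (ShortComplex.mk f g w).Exact) :
    (ShortComplex.mk f (g ≫ i) (by rw [reassoc_of% w, zero_comp])).Exact := by
  let ψ : ShortComplex.mk f g w ⟶
      ShortComplex.mk f (g ≫ i) (by rw [reassoc_of% w, zero_comp]) :=
    { τ₁ := 𝟙 X, τ₂ := 𝟙 Y, τ₃ := i }
  have : Epi ψ.τ₁ := inferInstanceAs (Epi (𝟙 X))
  have : IsIso ψ.τ₂ := inferInstanceAs (IsIso (𝟙 Y))
  have : Mono ψ.τ₃ := ‹Mono i›
  exact (ShortComplex.exact_iff_of_epi_of_isIso_of_mono ψ).1 h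

lemma RefinesEpis.exists_exact_lift [Abelian C] {P : ObjectProperty C} (hP : RefinesEpis P)
    {S : ShortComplex C} (hS : S.Exact) {Z : C} (g : Z ⟶ S.X₂) (hg : P (kernel (g ≫ S.g))) :
    ∃ (V : C) (v : V ⟶ Z) (ψ : V ⟶ S.X₁) (w : v ≫ g ≫ S.g = 0),
      P V ∧ ψ ≫ S.f = v ≫ g ∧ (ShortComplex.mk v (g ≫ S.g) w).Exact := by
  obtain ⟨B, p, hp, ψ, hψ⟩ :=
    hS.exact_up_to_refinements (kernel.ι (g ≫ S.g) ≫ g) (by simp [kernel.condition])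
  obtain ⟨V, v, hV, hv⟩ := hP p hp hg
  exact ⟨V, (v ≫ p) ≫ kernel.ι (g ≫ S.g), v ≫ ψ, by simp [kernel.condition], hV, by simp [hψ],
    exact_epi_comp (v ≫ p) (ShortComplex.exact_kernel (g ≫ S.g))⟩

lemma quasiIso_of_exact_cycles [Preadditive C] [Balanced C] [CategoryWithHomology C]
    {S T : ShortComplex C} (φ : S ⟶ T)
    {Z : C} {i : Z ⟶ S.X₂} (mono_i : Mono i) {wi : i ≫ S.g = 0}
    (hi : (ShortComplex.mk i S.g wi).Exact)
    {b : S.X₁ ⟶ Z} (hb : b ≫ i = S.f)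
    {g : Z ⟶ T.cycles} (hg : g ≫ T.iCycles = i ≫ φ.τ₂)
    (epi_homologyπ : Epi (g ≫ T.homologyπ)) {w : b ≫ g ≫ T.homologyπ = 0}
    (hH : (ShortComplex.mk b (g ≫ T.homologyπ) w).Exact) : ShortComplex.QuasiIso φ := by
  have lift_eq : hi.fIsKernel.lift (KernelFork.ofι S.f S.zero) = b := by
    rw [← cancel_mono i, hb]
    exact hi.fIsKernel.fac _ WalkingParallelPair.zero
  have comm_toCycles : b ≫ g = φ.τ₁ ≫ T.toCycles := by
    rw [← cancel_mono T.iCycles]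
    simp [hg, reassoc_of% hb, φ.comm₁₂]
  subst lift_eq
  let h : S.LeftHomologyData :=
    { K := Z
      H := T.homology
      i := i
      π := g ≫ T.homologyπ
      wi := wi
      hi := hi.fIsKernel
      wπ := w
      hπ := hH.gIsCokernel }
  let γ : ShortComplex.LeftHomologyMapData φ h T.leftHomologyData :=
    { φK := g
      φH := T.leftHomologyIso.inv
      commi := hg
      commf' := comm_toCycles
      commπ := by
        change (g ≫ T.homologyπ) ≫ T.leftHomologyIso.inv = g ≫ T.leftHomologyπ
        rw [Category.assoc, ShortComplex.homologyπ_comp_leftHomologyIso_inv] }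
  rw [γ.quasiIso_iff]
  exact inferInstanceAs (IsIso T.leftHomologyIso.inv)

lemma quasiIsoAt_of_exact_cycles [Preadditive C] [Balanced C] [CategoryWithHomology C]
    {ι : Type*} {c : ComplexShape ι} {L K : HomologicalComplex C c}
    (φ : L ⟶ K) {i j k : ι} (hij : c.prev j = i) (hjk : c.next j = k)
    {Z : C} {incl : Z ⟶ L.X j} (mono_incl : Mono incl) {wi : incl ≫ L.d j k = 0}
    (hi : (ShortComplex.mk incl (L.d j k) wi).Exact)
    {b : L.X i ⟶ Z} (hb : b ≫ incl = L.d i j)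
    {g : Z ⟶ K.cycles j} (hg : g ≫ K.iCycles j = incl ≫ φ.f j)
    (epi_homologyπ : Epi (g ≫ K.homologyπ j)) {w : b ≫ g ≫ K.homologyπ j = 0}
    (hH : (ShortComplex.mk b (g ≫ K.homologyπ j) w).Exact) : QuasiIsoAt φ j := by
  subst hij hjk
  rw [quasiIsoAt_iff]
  exact quasiIso_of_exact_cycles (S := L.sc j) (T := K.sc j) _ mono_incl hi hb hg epi_homologyπ hH

end Exactness

section Resolution

variable {A : Type*} [Category A] [Abelian A]

/-- The degree `j` part of a resolution of `K` by objects satisfying `P`: an object `X` over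
`K.X j` with a subobject `Z`, the cycles of the resolution, which maps onto the homology of `K`. -/
structure ResolutionStage {ι : Type*} {c : ComplexShape ι} (P : ObjectProperty A)
    (K : HomologicalComplex A c) (j : ι) where
  X : A
  Z : A
  incl : Z ⟶ X
  φ : X ⟶ K.X j
  toCycles : Z ⟶ K.cycles j
  prop_X : P X
  prop_Z : P Z
  mono_incl : Mono incl
  toCycles_i : toCycles ≫ K.iCycles j = incl ≫ φ
  epi_toHomology : Epi (toCycles ≫ K.homologyπ j)

namespace ResolutionStage

attribute [instance] mono_incl

section Extension

variable {ι : Type*} {c : ComplexShape ι} {P : ObjectProperty A} {K : HomologicalComplex A c}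
  {i j k : ι}

/-- A stage in degree `i` together with a differential to the stage `s` in degree `j`, whose kernel
is the object of cycles of the new stage and whose image consists of the cycles of `s` which are
boundaries in `K`. -/
structure Extension (s : ResolutionStage P K j) (i : ι) extends ResolutionStage P K i where
  d : X ⟶ s.Z
  φ_toCycles : φ ≫ K.toCycles i j = d ≫ s.toCycles
  incl_d : incl ≫ d = 0
  exact_incl_d : (ShortComplex.mk incl d incl_d).Exact
  d_toHomology : d ≫ s.toCycles ≫ K.homologyπ j = 0
  exact_d_toHomology : (ShortComplex.mk d (s.toCycles ≫ K.homologyπ j) d_toHomology).Exact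

lemma Extension.φ_d {s : ResolutionStage P K j} (t : s.Extension i) :
    t.φ ≫ K.d i j = (t.d ≫ s.incl) ≫ s.φ := by
  rw [← K.toCycles_i, reassoc_of% t.φ_toCycles, s.toCycles_i, Category.assoc]

lemma Extension.d_comp_d {s : ResolutionStage P K k} (t : s.Extension j)
    (u : t.toResolutionStage.Extension i) : (u.d ≫ t.incl) ≫ t.d ≫ s.incl = 0 := by
  rw [Category.assoc, reassoc_of% t.incl_d, zero_comp, comp_zero]

/-- The extension of `s` given by a differential `d`, with the kernel of `d` as its object of
cycles. The maps `k` and `w` witness that these cycles surject onto the homology of `K`. -/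
noncomputable def Extension.ofKernel (s : ResolutionStage P K j) (hij : c.Rel i j) {X : A}
    (φ : X ⟶ K.X i) (d : X ⟶ s.Z) (hX : P X) (hd : P (kernel d))
    (φ_toCycles : φ ≫ K.toCycles i j = d ≫ s.toCycles)
    (d_toHomology : d ≫ s.toCycles ≫ K.homologyπ j = 0)
    (exact_d_toHomology : (ShortComplex.mk d (s.toCycles ≫ K.homologyπ j) d_toHomology).Exact)
    {W : A} (k : W ⟶ X) (w : W ⟶ K.cycles i) (k_d : k ≫ d = 0) (w_i : w ≫ K.iCycles i = k ≫ φ)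
    [Epi (w ≫ K.homologyπ i)] : s.Extension i :=
  have ker_d_φ : (kernel.ι d ≫ φ) ≫ K.d i j = 0 := by
    rw [← K.toCycles_i, Category.assoc, reassoc_of% φ_toCycles, kernel.condition_assoc, zero_comp]
  { X := X
    Z := kernel d
    incl := kernel.ι d
    φ := φ
    toCycles := K.liftCycles (kernel.ι d ≫ φ) j (c.next_eq' hij) ker_d_φ
    prop_X := hX
    prop_Z := hd
    mono_incl := inferInstance
    toCycles_i := by simp
    epi_toHomology := by
      have lift_toCycles : kernel.lift d k k_d ≫
          K.liftCycles (kernel.ι d ≫ φ) j (c.next_eq' hij) ker_d_φ = w := by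
        simp [← cancel_mono (K.iCycles i), w_i]
      have : Epi (kernel.lift d k k_d ≫
          K.liftCycles (kernel.ι d ≫ φ) j (c.next_eq' hij) ker_d_φ ≫ K.homologyπ i) := by
        rwa [reassoc_of% lift_toCycles]
      exact epi_of_epi (kernel.lift d k k_d) _
    d := d
    φ_toCycles := φ_toCycles
    incl_d := kernel.condition d
    exact_incl_d := ShortComplex.exact_kernel d
    d_toHomology := d_toHomology
    exact_d_toHomology := exact_d_toHomology }

lemma nonempty_extension [P.IsClosedUnderKernels] [P.IsClosedUnderBinaryProducts]
    (hP : RefinesEpis P) (hij : c.Rel i j)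
    (hi : P (K.homology i)) (hj : P (K.homology j)) (s : ResolutionStage P K j) :
    Nonempty (s.Extension i) := by
  have exact_boundaries : (ShortComplex.mk (K.toCycles i j) (K.homologyπ j) (by simp)).Exact :=
    ShortComplex.exact_of_g_is_cokernel _ (K.homologyIsCokernel i j (c.prev_eq' hij))
  obtain ⟨V, v, ψ, hv, hV, hψ, exact_v⟩ :=
    hP.exists_exact_lift exact_boundaries s.toCycles (P.prop_kernel _ s.prop_Z hj)
  obtain ⟨W, w, hW, hw⟩ := hP (K.homologyπ i) inferInstance hi
  let d : V ⊞ W ⟶ s.Z := biprod.fst ≫ v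
  let φ : V ⊞ W ⟶ K.X i := biprod.desc ψ (w ≫ K.iCycles i)
  have φ_toCycles : φ ≫ K.toCycles i j = d ≫ s.toCycles := by
    rw [← cancel_mono (K.iCycles j)]
    apply biprod.hom_ext'
    · simpa [d, φ] using hψ =≫ K.iCycles j
    · simp [d, φ]
  have d_toHomology : d ≫ s.toCycles ≫ K.homologyπ j = 0 := by
    simpa [d] using congrArg (biprod.fst ≫ ·) hv
  have hVW : P (V ⊞ W) := P.prop_of_isLimit_binaryFan (BinaryBiproduct.isLimit V W) hV hW
  exact ⟨.ofKernel s hij φ d hVW (P.prop_kernel d hVW s.prop_Z) φ_toCycles d_toHomology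
    (exact_epi_comp biprod.fst exact_v) biprod.inr w (by simp [d]) (by simp [φ])⟩

end Extension

section Iterate

variable {P : ObjectProperty A} {K : ChainComplex A ℕ} (s₀ : ResolutionStage P K 0)
  (extend : ∀ (n : ℕ) (s : ResolutionStage P K n), s.Extension (n + 1))

/-- The stages obtained from `s₀` by successive extensions. -/
def iterate : ∀ n, ResolutionStage P K n
  | 0 => s₀
  | n + 1 => (extend n (iterate n)).toResolutionStage

/-- The extension leading from stage `n` to stage `n + 1` of `iterate`. -/
def iterateExtension (n : ℕ) : (s₀.iterate extend n).Extension (n + 1) :=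
  extend n (s₀.iterate extend n)

/-- The chain complex consisting of the objects `X` of the stages of `iterate`. -/
def resolution : ChainComplex A ℕ :=
  .of (fun n ↦ (s₀.iterate extend n).X)
    (fun n ↦ (s₀.iterateExtension extend n).d ≫ (s₀.iterate extend n).incl)
    (fun n ↦ (s₀.iterateExtension extend n).d_comp_d (s₀.iterateExtension extend (n + 1)))

lemma resolution_d (n : ℕ) : (s₀.resolution extend).d (n + 1) n =
    (s₀.iterateExtension extend n).d ≫ (s₀.iterate extend n).incl :=
  ChainComplex.of_d (fun n ↦ (s₀.iterate extend n).X)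
    (fun n ↦ (s₀.iterateExtension extend n).d ≫ (s₀.iterate extend n).incl) n

/-- The comparison map given by the maps `φ` of the stages of `iterate`. -/
def resolutionπ : s₀.resolution extend ⟶ K where
  f n := (s₀.iterate extend n).φ
  comm' := by
    rintro _ n rfl
    rw [resolution_d]
    exact (s₀.iterateExtension extend n).φ_d

lemma exact_incl_resolution_d [Epi s₀.incl] (n : ℕ) :
    ∃ w, (ShortComplex.mk (s₀.iterate extend n).incl
      ((s₀.resolution extend).d n ((ComplexShape.down ℕ).next n)) w).Exact := by
  cases n with
  | zero =>
    have d_eq_zero : (s₀.resolution extend).d 0 ((ComplexShape.down ℕ).next 0) = 0 :=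
      (s₀.resolution extend).shape _ _ (by simp)
    exact ⟨(s₀.incl ≫= d_eq_zero).trans comp_zero,
      (ShortComplex.exact_iff_epi _ d_eq_zero).2 ‹Epi s₀.incl›⟩
  | succ n =>
    have hn : (ComplexShape.down ℕ).next (n + 1) = n := by simp
    rw [hn, resolution_d]
    exact ⟨_, exact_comp_mono (s₀.iterate extend n).incl
      (s₀.iterateExtension extend n).exact_incl_d⟩

lemma quasiIso_resolutionπ [Epi s₀.incl] : QuasiIso (s₀.resolutionπ extend) where
  quasiIsoAt n := by
    obtain ⟨_, exact_cycles⟩ := s₀.exact_incl_resolution_d extend n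
    exact quasiIsoAt_of_exact_cycles _ (i := n + 1) (by simp) rfl (s₀.iterate extend n).mono_incl
      exact_cycles (s₀.resolution_d extend n).symm (s₀.iterate extend n).toCycles_i
      (s₀.iterate extend n).epi_toHomology (s₀.iterateExtension extend n).exact_d_toHomology

end Iterate

end ResolutionStage

lemma RefinesEpis.exists_chainComplex_quasiIso {P : ObjectProperty A} [P.IsClosedUnderKernels]
    [P.IsClosedUnderBinaryProducts] (hP : RefinesEpis P)
    (K : ChainComplex A ℕ) (hK : ∀ n, P (K.homology n)) :
    ∃ (L : ChainComplex A ℕ) (φ : L ⟶ K), (∀ n, P (L.X n)) ∧ QuasiIso φ := by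
  obtain ⟨W, w, hW, hw⟩ := hP (K.homologyπ 0) inferInstance (hK 0)
  let s₀ : ResolutionStage P K 0 :=
    { X := W, Z := W, incl := 𝟙 W, φ := w ≫ K.iCycles 0, toCycles := w, prop_X := hW, prop_Z := hW
      mono_incl := inferInstance, toCycles_i := by simp, epi_toHomology := hw }
  have : Epi s₀.incl := inferInstanceAs (Epi (𝟙 W))
  have extend n (s : ResolutionStage P K n) : Nonempty (s.Extension (n + 1)) :=
    s.nonempty_extension hP rfl (hK _) (hK _)
  exact ⟨_, s₀.resolutionπ fun n s ↦ (extend n s).some, fun n ↦ (s₀.iterate _ n).prop_X,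
    s₀.quasiIso_resolutionπ _⟩

end Resolution

section Truncation

variable {A : Type*} [Category A]

lemma exists_extend_quasiIso [Abelian A] (K : CochainComplex A ℤ) (N : ℤ) [K.IsLE N] :
    ∃ (K' : ChainComplex A ℕ) (ρ : K'.extend (ComplexShape.embeddingUpIntLE N) ⟶ K),
      QuasiIso ρ :=
  ⟨K.truncLE' _, (K.truncLEIso _).inv ≫ K.ιTruncLE N, inferInstance⟩

lemma prop_extend_X [HasZeroMorphisms A] [HasZeroObject A] {ι ι' : Type*} {c : ComplexShape ι}
    {c' : ComplexShape ι'} (e : c.Embedding c')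
    (P : ObjectProperty A) [P.ContainsZero] [P.IsClosedUnderIsomorphisms]
    {L : HomologicalComplex A c} (hL : ∀ i, P (L.X i)) (i' : ι') : P ((L.extend e).X i') := by
  by_cases! hi' : ∃ i, e.f i = i'
  · obtain ⟨i, hi⟩ := hi'
    exact P.prop_of_iso (L.extendXIso e hi).symm (hL i)
  · exact P.prop_of_isZero (L.isZero_extend_X e i' hi')

theorem stmt_2_general [Abelian A] (P : ObjectProperty A) [P.IsClosedUnderKernels]
    [P.IsClosedUnderBinaryProducts] (hP : RefinesEpis P) (K : CochainComplex A ℤ) (N : ℤ)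
    [K.IsLE N] (hK : ∀ n, P (K.homology n)) :
    ∃ (L : CochainComplex A ℤ) (φ : L ⟶ K),
      (∀ n, P (L.X n)) ∧ L.IsStrictlyLE N ∧ QuasiIso φ := by
  have := isClosedUnderIsomorphisms_of_isClosedUnderKernels P
  have : P.ContainsZero := ⟨_, K.isZero_of_isLE N (N + 1), hK (N + 1)⟩
  let e := ComplexShape.embeddingUpIntLE N
  obtain ⟨K', ρ, _⟩ := exists_extend_quasiIso K N
  have hK' (n : ℕ) : P (K'.homology n) :=
    P.prop_of_iso ((isoOfQuasiIsoAt ρ (e.f n)).symm ≪≫ K'.extendHomologyIso e rfl) (hK _)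
  obtain ⟨L, φ, hL, _⟩ := hP.exists_chainComplex_quasiIso K' hK'
  exact ⟨L.extend e, HomologicalComplex.extendMap φ e ≫ ρ, prop_extend_X e P hL,
    inferInstance, inferInstance⟩

end Truncation

/-- Let `A` be abelian and `U ⊆ A` (the predicate `P`) a non-empty full
subcategory closed under kernels, cokernels and extensions (and isomorphisms), with the
lifting property for epimorphisms onto objects of `U`. Then every bounded above cochain
complex `K` in `A` with all cohomology objects in `U` admits a quasi-isomorphism
`L ⟶ K` from a bounded above complex `L` with all components in `U`. -/
theorem stmt_2 {A : Type*} [Category A] [Abelian A] (P : A → Prop)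
    (hne : ∃ X, P X)
    (hiso : ∀ {X Y : A}, (X ≅ Y) → P X → P Y)
    (hker : ∀ {X Y : A} (f : X ⟶ Y), P X → P Y → P (kernel f))
    (hcoker : ∀ {X Y : A} (f : X ⟶ Y), P X → P Y → P (cokernel f))
    (hext : ∀ (S : ShortComplex A), S.ShortExact → P S.X₁ → P S.X₃ → P S.X₂)
    (hlift : ∀ {B U : A} (p : B ⟶ U), Epi p → P U →
      ∃ (V : A) (v : V ⟶ B), P V ∧ Epi (v ≫ p))
    (K : CochainComplex A ℤ) (N : ℤ) (hK : ∀ n, N < n → IsZero (K.X n))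
    (hH : ∀ n : ℤ, P (K.homology n)) :
    ∃ (L : CochainComplex A ℤ) (N' : ℤ), (∀ n, P (L.X n)) ∧
      (∀ n, N' < n → IsZero (L.X n)) ∧ ∃ (φ : L ⟶ K), QuasiIso φ := by
  have : ObjectProperty.IsClosedUnderIsomorphisms P := ⟨hiso⟩
  have : ObjectProperty.IsClosedUnderExtensions P := ⟨hext _⟩
  have := isClosedUnderKernels_of_prop_kernel P hker
  have := isClosedUnderBinaryProducts_of_isClosedUnderExtensions P
  have : K.IsStrictlyLE N := (K.isStrictlyLE_iff N).2 hK
  obtain ⟨L, φ, hL, _, hφ⟩ := stmt_2_general P (fun _ _ ↦ hlift) K N hH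
  exact ⟨L, N, hL, fun n hn ↦ L.isZero_of_isStrictlyLE N n hn, φ, hφ⟩
end

section
/- Let R be a quasi-Frobenius ring of infinite global dimension. Then the canonical triangulated functor from the unbounded derived category D(mod R) of finitely generated left R-modules to D(Mod R) is not full. -/
open CategoryTheory CategoryTheory.Limits

/-
Let `S` be a nonprojective simple module. Iterated cosyzygies and syzygies of `Sⁿ` provide finitely
generated modules `Aₙ`, `Bₙ` and universal classes in `Extⁿ(Aₙ, Sⁿ)` and `Extⁿ(Sⁿ, Bₙ)`. If their
product `eₙ ∈ Ext²ⁿ(Aₙ, Bₙ)` is also the product of a class in `Extⁿ(Aₙ, T)` and a class in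
`Extⁿ(T, Bₙ)`, then up to maps factoring through a projective module the identity of `Sⁿ` factors
through `T`. A map `Sⁿ → Sⁿ` factoring through a projective module vanishes, so `Sⁿ` embeds in `T`.

In `D(Mod R)` all the `eₙ` assemble to one morphism `⨁ Aₙ[-n] ⟶ ⨁ Bₙ[n]`, whose source and target
lie in the image of `D(mod R)`. If this morphism comes from `D(mod R)`, a roof representing it there
has as its apex a complex `P` of finitely generated modules which is acyclic in negative degrees.
Since `Bₙ[n]` lives in degrees `≤ 0`, each `eₙ` factors through the cokernel `T` of `P⁻¹ ⟶ P⁰`. So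
one noetherian module `T` contains all the `Sⁿ`, which is absurd.
-/

section Colimits

variable {C J : Type*} [Category* C] [Abelian C] [Category* J] [HasColimitsOfShape J C]
  [HasExactColimitsOfShape J C]

lemma shortComplex_quasiIso_of_isColimit {F G : J ⥤ ShortComplex C} (α : F ⟶ G)
    (hα : ∀ j, ShortComplex.QuasiIso (α.app j)) {c₁ : Cocone F} {c₂ : Cocone G}
    (h₁ : IsColimit c₁) (h₂ : IsColimit c₂) (φ : c₁.pt ⟶ c₂.pt)
    (hφ : ∀ j, c₁.ι.app j ≫ φ = α.app j ≫ c₂.ι.app j) : ShortComplex.QuasiIso φ := by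
  let β := (ShortComplex.functorEquivalence J C).inverse.map α
  have hβ : ShortComplex.QuasiIso β := (ShortComplex.quasiIso_iff_evaluation β).2 hα
  let γ : (ShortComplex.colimitCocone F).pt ⟶ (ShortComplex.colimitCocone G).pt :=
    (colim (J := J)).mapShortComplex.map β
  have hγ : ShortComplex.QuasiIso γ :=
    inferInstanceAs (ShortComplex.QuasiIso ((colim (J := J)).mapShortComplex.map β))
  have ι_γ (j : J) : (ShortComplex.colimitCocone F).ι.app j ≫ γ =
      α.app j ≫ (ShortComplex.colimitCocone G).ι.app j := by
    ext
    all_goals exact ι_colimMap _ _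
  let e₁ := (ShortComplex.isColimitColimitCocone F).coconePointUniqueUpToIso h₁
  let e₂ := (ShortComplex.isColimitColimitCocone G).coconePointUniqueUpToIso h₂
  exact ShortComplex.quasiIso_of_arrow_mk_iso γ φ <| Arrow.isoMk e₁ e₂ <|
    (ShortComplex.isColimitColimitCocone F).hom_ext fun j ↦ by
      simp [e₁, e₂, hφ, reassoc_of% ι_γ]

instance isStableUnderColimitsOfShape_quasiIso {ι : Type*} (c : ComplexShape ι) :
    (HomologicalComplex.quasiIso C c).IsStableUnderColimitsOfShape J where
  condition F G c₁ c₂ h₁ h₂ α hα φ hφ := by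
    rw [HomologicalComplex.mem_quasiIso_iff, quasiIso_iff]
    intro i
    let sc := HomologicalComplex.shortComplexFunctor C c i
    have isColimit_sc {H : J ⥤ HomologicalComplex C c} {d : Cocone H} (hd : IsColimit d) :
        IsColimit (sc.mapCocone d) :=
      ShortComplex.isColimitOfIsColimitπ _
        (isColimitOfPreserves (HomologicalComplex.eval C c _) hd)
        (isColimitOfPreserves (HomologicalComplex.eval C c _) hd)
        (isColimitOfPreserves (HomologicalComplex.eval C c _) hd)
    rw [quasiIsoAt_iff]
    exact shortComplex_quasiIso_of_isColimit (Functor.whiskerRight α sc)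
      (fun j ↦ (quasiIsoAt_iff (α.app j) i).1 ((hα j).quasiIsoAt i))
      (isColimit_sc h₁) (isColimit_sc h₂) (sc.map φ) fun j ↦ by
        simpa using congr(sc.map $(hφ j))

end Colimits

section ZeroDifferential

variable {C ι : Type*} [Category* C] [HasZeroMorphisms C]

/-- The complex with zero differential and given terms. -/
@[simps]
def zeroDifferential (c : ComplexShape ι) (X : ι → C) : HomologicalComplex C c where
  X := X
  d _ _ := 0

variable [HasZeroObject C] [DecidableEq ι] {c : ComplexShape ι} {K : HomologicalComplex C c}

lemma exists_isColimit_single (hK : ∀ i j, K.d i j = 0) :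
    ∃ t : ∀ i, (HomologicalComplex.single C c i).obj (K.X i) ⟶ K,
      Nonempty (IsColimit (Cofan.mk K t)) := by
  let t (i : ι) : (HomologicalComplex.single C c i).obj (K.X i) ⟶ K :=
    HomologicalComplex.mkHomFromSingle (𝟙 (K.X i)) fun j _ ↦ by simp [hK]
  refine ⟨t, ⟨Cofan.IsColimit.mk _
    (fun s ↦
      { f i := (HomologicalComplex.singleObjXSelf c i (K.X i)).inv ≫ (s.inj i).f i
        comm' i j _ := ?_}) (fun s i ↦ ?_) fun s m hm ↦ ?_⟩⟩
  · rw [Category.assoc, (s.inj i).comm]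
    simp [hK]
  · ext
    simp [t]
  · ext i
    simp [← hm, t]

lemma nonempty_retract_single (hK : ∀ i j, K.d i j = 0) (i : ι) :
    Nonempty (Retract ((HomologicalComplex.single C c i).obj (K.X i)) K) :=
  ⟨{ i := HomologicalComplex.mkHomFromSingle (𝟙 (K.X i)) fun j _ ↦ by simp [hK]
     r := HomologicalComplex.mkHomToSingle (𝟙 (K.X i)) fun j _ ↦ by simp [hK]
     retract := by
      apply HomologicalComplex.from_single_hom_ext
      simp }⟩

end ZeroDifferential

section Truncation

open CochainComplex

variable {C : Type*} [Category* C] [Abelian C] {K L M : CochainComplex C ℤ} {n : ℤ}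

lemma exists_isStrictlyLE_isIso_f (K : CochainComplex C ℤ) (n : ℤ) :
    ∃ (L : CochainComplex C ℤ) (p : K ⟶ L), L.IsStrictlyLE n ∧ ∀ i ≤ n, IsIso (p.f i) := by
  let e := ComplexShape.embeddingUpIntLE n
  have no_boundary (j : ℕ) : ¬ e.BoundaryGE j := fun hj ↦
    hj.2 (j + 1) (by simp only [e, ComplexShape.embeddingUpIntLE_f, ComplexShape.up_Rel]; lia)
  refine ⟨K.stupidTrunc e, e.liftExtend (𝟙 _) fun j hj ↦ (no_boundary j hj).elim,
    inferInstance, fun i hi ↦ ?_⟩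
  obtain ⟨j, rfl⟩ := Int.exists_add_of_le hi
  exact (e.isIso_liftExtend_f_iff (i := j) _ _ (by simp [e])).2
    (inferInstanceAs (IsIso (𝟙 ((K.restriction e).X j))))

lemma isGE_of_isIso_f [K.IsGE n] (p : K ⟶ L) (hp : ∀ i ≤ n, IsIso (p.f i)) : L.IsGE n := by
  rw [isGE_iff]
  intro i hi
  have := hp (i - 1) (by lia)
  have := hp i hi.le
  have := hp (i + 1) hi
  have hK := K.exactAt_of_isGE n i hi
  rw [HomologicalComplex.exactAt_iff' _ (i - 1) i (i + 1) (by simp) (by simp)] at hK ⊢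
  let q : K.sc' (i - 1) i (i + 1) ⟶ L.sc' (i - 1) i (i + 1) :=
    (HomologicalComplex.shortComplexFunctor' C _ (i - 1) i (i + 1)).map p
  have : Epi q.τ₁ := inferInstanceAs (Epi (p.f (i - 1)))
  have : IsIso q.τ₂ := inferInstanceAs (IsIso (p.f i))
  have : Mono q.τ₃ := inferInstanceAs (Mono (p.f (i + 1)))
  exact (ShortComplex.exact_iff_of_epi_of_isIso_of_mono q).1 hK

lemma exists_comp_eq_of_isIso_f [L.IsStrictlyLE n] [M.IsStrictlyLE n] (p : K ⟶ L)
    (hp : ∀ i ≤ n, IsIso (p.f i)) (v : K ⟶ M) : ∃ w : L ⟶ M, p ≫ w = v := by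
  have : Epi p := HomologicalComplex.epi_of_epi_f _ fun i ↦ by
    by_cases hi : i ≤ n
    · have := hp i hi
      infer_instance
    · exact (L.isZero_of_isStrictlyLE n i).epi _
  refine ⟨Abelian.epiDesc p v ?_, Abelian.comp_epiDesc p v _⟩
  ext i
  by_cases hi : i ≤ n
  · have := hp i hi
    have hk : (kernel.ι p).f i = 0 := by
      rw [← cancel_mono (p.f i), ← HomologicalComplex.comp_f, kernel.condition, zero_comp]
      rfl
    simp [hk]
  · exact (M.isZero_of_isStrictlyLE n i).eq_of_tgt _ _

lemma exists_quasiIso_single [K.IsGE n] [K.IsStrictlyLE n] :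
    ∃ (T : C) (r : K ⟶ (HomologicalComplex.single C _ n).obj T), QuasiIso r ∧ Epi (r.f n) := by
  have : (K.truncGE n).IsStrictlyLE n := inferInstance
  obtain ⟨T, ⟨e⟩⟩ := (K.truncGE n).exists_iso_single n
  refine ⟨T, K.πTruncGE n ≫ e.hom, inferInstance, ?_⟩
  rw [HomologicalComplex.comp_f]
  have : Epi ((K.πTruncGE n).f n) :=
    inferInstanceAs (Epi ((HomologicalComplex.πTruncGE K (ComplexShape.embeddingUpIntGE n)).f n))
  infer_instance

open DerivedCategory in
lemma exists_factor_through_single [HasDerivedCategory C] [K.IsGE n] :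
    ∃ (T : C) (π : K.X n ⟶ T)
      (γ : Q.obj K ⟶ Q.obj ((HomologicalComplex.single C _ n).obj T)), Epi π ∧
      ∀ (M : CochainComplex C ℤ) [M.IsStrictlyLE n] (v : K ⟶ M), ∃ β, γ ≫ β = Q.map v := by
  obtain ⟨L, p, hL, hp⟩ := exists_isStrictlyLE_isIso_f K n
  have := isGE_of_isIso_f p hp
  obtain ⟨T, r, hr, hrn⟩ := exists_quasiIso_single (K := L) (n := n)
  have := hp n le_rfl
  have : IsIso (Q.map r) := (isIso_Q_map_iff_quasiIso (C := C) _).2 hr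
  refine ⟨T, p.f n ≫ r.f n ≫ (HomologicalComplex.singleObjXSelf _ n T).hom,
    Q.map (p ≫ r), inferInstance, fun M _ v ↦ ?_⟩
  obtain ⟨w, rfl⟩ := exists_comp_eq_of_isIso_f p hp v
  exact ⟨inv (Q.map r) ≫ Q.map w, by
    rw [Q.map_comp, Category.assoc, IsIso.hom_inv_id_assoc, Q.map_comp]⟩

end Truncation

section DerivedCategory

open DerivedCategory

lemma exists_hom_singleFunctor_of_ext {C : Type*} [Category* C] [Abelian C] [HasExt C]
    [HasDerivedCategory C] {A B : C} {a b : ℕ} (e : Abelian.Ext A B (a + b)) :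
    ∃ φ : (singleFunctor C a).obj A ⟶ (singleFunctor C (-b)).obj B,
      ∀ (T : C) (x : (singleFunctor C a).obj A ⟶ (singleFunctor C 0).obj T)
        (y : (singleFunctor C 0).obj T ⟶ (singleFunctor C (-b)).obj B), x ≫ y = φ →
        ∃ (α : Abelian.Ext A T a) (β : Abelian.Ext T B b), α.comp β rfl = e := by
  obtain ⟨e, rfl⟩ := Abelian.Ext.homEquiv.symm.surjective e
  let u : (singleFunctor C 0).obj A ≅ ((singleFunctor C a).obj A)⟦(a : ℤ)⟧ :=
    ((singleFunctors C).shiftIso a 0 a (by simp)).symm.app A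
  let w : (singleFunctor C (-b)).obj B ≅ ((singleFunctor C 0).obj B)⟦(b : ℤ)⟧ :=
    ((singleFunctors C).shiftIso b (-b) 0 (by simp)).symm.app B
  let t := (shiftFunctorAdd' (DerivedCategory C) (b : ℤ) a (a + b : ℕ) (by lia)).app
    ((singleFunctor C 0).obj B)
  let f := (shiftFunctor (DerivedCategory C) (a : ℤ)).preimage (u.inv ≫ e ≫ t.hom)
  refine ⟨f ≫ w.inv, fun T x y hxy ↦ ⟨Abelian.Ext.homEquiv.symm (u.hom ≫ x⟦(a : ℤ)⟧'),
    Abelian.Ext.homEquiv.symm (y ≫ w.hom), ?_⟩⟩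
  have comp_eq : x⟦(a : ℤ)⟧' ≫ (y ≫ w.hom)⟦(a : ℤ)⟧' = u.inv ≫ e ≫ t.hom := by
    rw [← Functor.map_comp, reassoc_of% hxy, w.inv_hom_id, Category.comp_id,
      Functor.map_preimage]
  ext
  rw [Abelian.Ext.comp_hom]
  simp only [Abelian.Ext.hom, Equiv.apply_symm_apply, ShiftedHom.comp]
  rw [Category.assoc, reassoc_of% comp_eq, Iso.hom_inv_id_assoc]
  exact (congrArg (e ≫ ·) t.hom_inv_id).trans (Category.comp_id e)

variable {C : Type*} [Category* C] [Abelian C] [HasDerivedCategory C]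

lemma exists_Q_map_inj_comp {J : Type*} [HasCoproductsOfShape J C]
    [HasExactColimitsOfShape (Discrete J) C] {X : J → CochainComplex C ℤ} {c : Cofan X}
    (hc : IsColimit c) {Y : CochainComplex C ℤ} (f : ∀ j, Q.obj (X j) ⟶ Q.obj Y) :
    ∃ g : Q.obj c.pt ⟶ Q.obj Y, ∀ j, Q.map (c.inj j) ≫ g = f j := by
  choose P s hs u hu using fun j ↦ right_fac (f j)
  let t : (∐ P) ⟶ c.pt := Sigma.desc fun j ↦ s j ≫ c.inj j
  have inj_t (j : J) : Sigma.ι P j ≫ t = s j ≫ c.inj j := by simp [t]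
  have ht : QuasiIso t :=
    MorphismProperty.IsStableUnderColimitsOfShape.condition
      (W := HomologicalComplex.quasiIso C (.up ℤ)) _ _ _ _ (coproductIsCoproduct P) hc
      (Discrete.natTrans fun j ↦ s j.as)
      (fun j ↦ (isIso_Q_map_iff_quasiIso (C := C) _).1 (hs j.as)) t fun j ↦ inj_t j.as
  have : IsIso (Q.map t) := (isIso_Q_map_iff_quasiIso (C := C) _).2 ht
  refine ⟨inv (Q.map t) ≫ Q.map (Sigma.desc u), fun j ↦ ?_⟩
  rw [hu j, ← cancel_epi (Q.map (s j)), ← Q.map_comp_assoc, ← inj_t, Q.map_comp_assoc,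
    IsIso.hom_inv_id_assoc, IsIso.hom_inv_id_assoc, ← Q.map_comp, Sigma.ι_desc]

end DerivedCategory

section Full

open DerivedCategory ZeroObject

variable {C D : Type*} [Category* C] [Abelian C] [HasDerivedCategory C] [Category* D] [Abelian D]
  [HasDerivedCategory D] (G : C ⥤ D) [G.PreservesZeroMorphisms]
  (F : DerivedCategory C ⥤ DerivedCategory D) [F.Full]

lemma exists_quasiIso_of_full
    (e : G.mapHomologicalComplex (ComplexShape.up ℤ) ⋙ Q ≅ Q ⋙ F) {X Y : CochainComplex C ℤ}
    (f : Q.obj ((G.mapHomologicalComplex _).obj X) ⟶ Q.obj ((G.mapHomologicalComplex _).obj Y)) :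
    ∃ (P : CochainComplex C ℤ) (s : P ⟶ X) (u : P ⟶ Y),
      QuasiIso ((G.mapHomologicalComplex _).map s) ∧
        Q.map ((G.mapHomologicalComplex _).map s) ≫ f =
          Q.map ((G.mapHomologicalComplex _).map u) := by
  obtain ⟨g, hg⟩ := F.map_surjective (e.inv.app X ≫ f ≫ e.hom.app Y)
  obtain ⟨P, s, hs, u, rfl⟩ := right_fac g
  have Q_map_map {Z : CochainComplex C ℤ} (v : P ⟶ Z) :
      Q.map ((G.mapHomologicalComplex _).map v) ≫ e.hom.app Z =
        e.hom.app P ≫ F.map (Q.map v) := e.hom.naturality v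
  have hs' : IsIso (Q.map ((G.mapHomologicalComplex _).map s)) := by
    have : IsIso (Q.map ((G.mapHomologicalComplex _).map s) ≫ e.hom.app X) := by
      rw [Q_map_map]; infer_instance
    exact IsIso.of_isIso_comp_right _ (e.hom.app X)
  refine ⟨P, s, u, (isIso_Q_map_iff_quasiIso (C := D) _).1 hs', ?_⟩
  have hf : f ≫ e.hom.app Y = e.hom.app X ≫ F.map (inv (Q.map s) ≫ Q.map u) := by
    rw [hg, Iso.hom_inv_id_app_assoc]
  rw [← cancel_mono (e.hom.app Y), Category.assoc, hf, ← Category.assoc, Q_map_map, Q_map_map,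
    Category.assoc, ← F.map_comp, IsIso.hom_inv_id_assoc]

lemma exists_factor_through_single_of_full
    (e : G.mapHomologicalComplex (ComplexShape.up ℤ) ⋙ Q ≅ Q ⋙ F) {X Y : CochainComplex C ℤ} {n : ℤ}
    [CochainComplex.IsGE ((G.mapHomologicalComplex (.up ℤ)).obj X) n]
    (g : Q.obj ((G.mapHomologicalComplex _).obj X) ⟶ Q.obj ((G.mapHomologicalComplex _).obj Y)) :
    ∃ (U : C) (T : D) (π : G.obj U ⟶ T) (γ : Q.obj ((G.mapHomologicalComplex _).obj X) ⟶
      Q.obj ((HomologicalComplex.single D _ n).obj T)), Epi π ∧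
      ∀ (M : CochainComplex D ℤ) [M.IsStrictlyLE n] (v : (G.mapHomologicalComplex _).obj Y ⟶ M),
        ∃ β, γ ≫ β = g ≫ Q.map v := by
  let H := G.mapHomologicalComplex (.up ℤ)
  obtain ⟨P, s, u, hs, hu⟩ := exists_quasiIso_of_full G F e g
  have : CochainComplex.IsGE (H.obj P) n :=
    (HomologicalComplex.isSupported_iff_of_quasiIso (H.map s) _).2 inferInstance
  have : IsIso (Q.map (H.map s)) := (isIso_Q_map_iff_quasiIso (C := D) _).2 hs
  obtain ⟨T, π, γ, hπ, hγ⟩ := exists_factor_through_single (K := H.obj P) (n := n)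
  refine ⟨P.X n, T, π, inv (Q.map (H.map s)) ≫ γ, hπ, fun M _ v ↦ ?_⟩
  obtain ⟨β, hβ⟩ := hγ M (H.map u ≫ v)
  refine ⟨β, ?_⟩
  rw [Category.assoc, hβ, Q.map_comp, ← hu, Category.assoc, IsIso.inv_hom_id_assoc]

lemma exists_factor_of_full [HasCoproductsOfShape ℤ D] [HasExactColimitsOfShape (Discrete ℤ) D]
    (e : G.mapHomologicalComplex (ComplexShape.up ℤ) ⋙ Q ≅ Q ⋙ F) {A B : ℕ → C}
    (φ : ∀ n : ℕ, Q.obj ((HomologicalComplex.single D _ (n : ℤ)).obj (G.obj (A n))) ⟶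
      Q.obj ((HomologicalComplex.single D _ (-n : ℤ)).obj (G.obj (B n)))) :
    ∃ (U : C) (T : D) (π : G.obj U ⟶ T), Epi π ∧ ∀ n : ℕ,
      ∃ (x : _ ⟶ Q.obj ((HomologicalComplex.single D _ (0 : ℤ)).obj T)) (y : _ ⟶ _),
        x ≫ y = φ n := by
  let H : CochainComplex C ℤ ⥤ CochainComplex D ℤ := G.mapHomologicalComplex (.up ℤ)
  let X : CochainComplex C ℤ := zeroDifferential _ fun | .ofNat n => A n | .negSucc _ => 0
  let Y : CochainComplex C ℤ := zeroDifferential _ fun i ↦ B i.natAbs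
  have : (H.obj X).IsStrictlyGE 0 := by
    rw [CochainComplex.isStrictlyGE_iff]
    rintro (i | i) hi
    · exact absurd hi (by simp)
    · exact G.map_isZero (isZero_zero C)
  have retract (n : ℕ) :
      Nonempty (Retract ((HomologicalComplex.single D (.up ℤ) (-n)).obj (G.obj (B n)))
        (H.obj Y)) := by
    simpa [H, Y] using nonempty_retract_single (K := H.obj Y) (fun _ _ ↦ G.map_zero _ _) (-n)
  let ρ n := (retract n).some
  obtain ⟨t, ⟨ht⟩⟩ := exists_isColimit_single (K := H.obj X) fun _ _ ↦ G.map_zero _ _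
  obtain ⟨g, hg⟩ := exists_Q_map_inj_comp ht (Y := H.obj Y) fun
    | .ofNat n => φ n ≫ Q.map (ρ n).i
    | .negSucc _ => 0
  obtain ⟨U, T, π, γ, hπ, hγ⟩ := exists_factor_through_single_of_full G F e (n := 0) g
  refine ⟨U, T, π, hπ, fun n ↦ ?_⟩
  have : CochainComplex.IsStrictlyLE
      ((HomologicalComplex.single D (.up ℤ) (-n)).obj (G.obj (B n))) 0 :=
    CochainComplex.isStrictlyLE_of_le _ (-n) 0 (by simp)
  obtain ⟨y, hy⟩ := hγ _ (ρ n).r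
  let tₙ : (HomologicalComplex.single D (.up ℤ) (n : ℤ)).obj (G.obj (A n)) ⟶ H.obj X := t n
  have htg : Q.map tₙ ≫ g = φ n ≫ Q.map (ρ n).i := hg n
  refine ⟨Q.map tₙ ≫ γ, y, ?_⟩
  rw [Category.assoc, hy, reassoc_of% htg, ← Q.map_comp, Retract.retract]
  rw [Q.map_id, Category.comp_id]

lemma exists_comp_eq_of_full [HasCoproductsOfShape ℤ D] [HasExactColimitsOfShape (Discrete ℤ) D]
    [HasExt D]
    (e : G.mapHomologicalComplex (ComplexShape.up ℤ) ⋙ Q ≅ Q ⋙ F) {A B : ℕ → C}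
    (ξ : ∀ n : ℕ, Abelian.Ext (G.obj (A n)) (G.obj (B n)) (n + n)) :
    ∃ (U : C) (T : D) (π : G.obj U ⟶ T), Epi π ∧ ∀ n,
      ∃ (α : Abelian.Ext (G.obj (A n)) T n) (β : Abelian.Ext T (G.obj (B n)) n),
        α.comp β rfl = ξ n := by
  choose φ hφ using fun n ↦ exists_hom_singleFunctor_of_ext (ξ n)
  obtain ⟨U, T, π, hπ, h⟩ := exists_factor_of_full G F e φ
  refine ⟨U, T, π, hπ, fun n ↦ ?_⟩
  obtain ⟨x, y, hxy⟩ := h n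
  exact hφ n T x y hxy

end Full

section SyzygyClass

variable {C : Type*} [Category* C] [Abelian C] [HasExt C] {A B M T : C} {m n : ℕ}

open Abelian

lemma exists_ext_forall_comp_eq_of_iso {A' B' : C} (i : A' ≅ A) (j : B' ≅ B)
    (e : Ext A B (m + n)) :
    ∃ e' : Ext A' B' (m + n), ∀ (T : C) (α : Ext A' T m) (β : Ext T B' n), α.comp β rfl = e' →
      ∃ (α' : Ext A T m) (β' : Ext T B n), α'.comp β' rfl = e := by
  refine ⟨(Ext.mk₀ i.hom).comp (e.comp (.mk₀ j.inv) (add_zero _)) (zero_add _), fun T α β h ↦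
    ⟨(Ext.mk₀ i.inv).comp α (zero_add _), β.comp (.mk₀ j.hom) (add_zero _), ?_⟩⟩
  calc
    _ = (Ext.mk₀ i.inv).comp ((α.comp β rfl).comp (.mk₀ j.hom) (add_zero _)) (zero_add _) := by
      rw [Ext.comp_assoc_of_third_deg_zero, Ext.comp_assoc _ _ _ _ _ (by lia)]
    _ = e := by simp [h]

/-- A class `a ∈ Extⁿ(A, M)` identifying `M` with an `n`-th syzygy of `A` as far as classes of
degree at least `n` out of `A` are concerned: those of degree `n` are pushouts of `a`, and
composing with `a` loses no class of positive degree out of `M`. -/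
structure IsSyzygyClass (a : Ext A M n) : Prop where
  exists_comp_mk₀ {N : C} (x : Ext A N n) : ∃ φ : M ⟶ N, a.comp (.mk₀ φ) (add_zero n) = x
  eq_zero_of_comp_eq_zero {N : C} {k p : ℕ} (x : Ext M N (k + 1)) (hp : n + (k + 1) = p)
    (hx : a.comp x hp = 0) : x = 0

/-- A class `b ∈ Extⁿ(M, B)` identifying `M` with an `n`-th cosyzygy of `B`: classes of degree `n`
into `B` are pullbacks of `b`, along morphisms unique up to those factoring through a
projective object. -/
structure IsCosyzygyClass (b : Ext M B n) : Prop where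
  exists_mk₀_comp {N : C} (x : Ext N B n) : ∃ ψ : N ⟶ M, (Ext.mk₀ ψ).comp b (zero_add n) = x
  exists_projective_of_mk₀_comp_eq_zero {N : C} (f : N ⟶ M)
    (hf : (Ext.mk₀ f).comp b (zero_add n) = 0) :
    ∃ (P : C) (g : N ⟶ P) (h : P ⟶ M), Projective P ∧ g ≫ h = f

lemma isSyzygyClass_mk₀_id (M : C) : IsSyzygyClass (Ext.mk₀ (𝟙 M)) where
  exists_comp_mk₀ x := by
    obtain ⟨φ, rfl⟩ := Ext.addEquiv₀.symm.surjective x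
    exact ⟨φ, Ext.mk₀_id_comp _⟩
  eq_zero_of_comp_eq_zero x hp hx := by
    obtain rfl : _ = _ := (zero_add _).symm.trans hp
    rwa [Ext.mk₀_id_comp] at hx

variable {S : ShortComplex C} (hS : S.ShortExact)

lemma IsSyzygyClass.extClass_comp [Projective S.X₂] {a : Ext S.X₁ M n} (ha : IsSyzygyClass a) :
    IsSyzygyClass (hS.extClass.comp a (add_comm 1 n)) where
  exists_comp_mk₀ x := by
    obtain ⟨y, rfl⟩ :=
      Ext.contravariant_sequence_exact₃ hS _ x (Ext.eq_zero_of_projective _) (add_comm 1 n)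
    obtain ⟨φ, rfl⟩ := ha.exists_comp_mk₀ y
    exact ⟨φ, Ext.comp_assoc_of_third_deg_zero _ _ _ _⟩
  eq_zero_of_comp_eq_zero {N k p} x hp hx := by
    refine ha.eq_zero_of_comp_eq_zero x rfl ?_
    rw [Ext.comp_assoc _ _ _ _ rfl (by lia)] at hx
    obtain ⟨y, hy⟩ := Ext.contravariant_sequence_exact₁ hS _ _ _ hx
    rw [← hy, show y = 0 from Ext.eq_zero_of_projective (n := n + k) y, Ext.comp_zero]

lemma isCosyzygyClass_extClass [Projective S.X₂] [Injective S.X₂] :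
    IsCosyzygyClass hS.extClass where
  exists_mk₀_comp x := by
    obtain ⟨y, rfl⟩ := Ext.covariant_sequence_exact₁ _ hS x (Ext.eq_zero_of_injective _) rfl
    obtain ⟨ψ, rfl⟩ := Ext.addEquiv₀.symm.surjective y
    exact ⟨ψ, rfl⟩
  exists_projective_of_mk₀_comp_eq_zero f hf := by
    obtain ⟨y, hy⟩ := Ext.covariant_sequence_exact₃ _ hS _ _ hf
    obtain ⟨g, rfl⟩ := Ext.addEquiv₀.symm.surjective y
    refine ⟨S.X₂, g, S.g, inferInstance, Ext.addEquiv₀.symm.injective ?_⟩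
    exact (Ext.mk₀_comp_mk₀ _ _).symm.trans hy

lemma IsCosyzygyClass.comp_extClass [Injective S.X₂] {b : Ext M S.X₃ (n + 1)}
    (hb : IsCosyzygyClass b) : IsCosyzygyClass (b.comp hS.extClass rfl) where
  exists_mk₀_comp x := by
    obtain ⟨y, rfl⟩ := Ext.covariant_sequence_exact₁ _ hS x (Ext.eq_zero_of_injective _) rfl
    obtain ⟨ψ, rfl⟩ := hb.exists_mk₀_comp y
    exact ⟨ψ, (Ext.comp_assoc _ _ _ _ _ (by lia)).symm⟩
  exists_projective_of_mk₀_comp_eq_zero f hf := by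
    refine hb.exists_projective_of_mk₀_comp_eq_zero f ?_
    rw [← Ext.comp_assoc _ _ _ (zero_add _) rfl (by lia)] at hf
    obtain ⟨y, hy⟩ := Ext.covariant_sequence_exact₃ _ hS _ _ hf
    rw [← hy, Ext.eq_zero_of_injective y, Ext.zero_comp]

lemma IsSyzygyClass.exists_projective_of_comp_eq {k : ℕ} {a : Ext A M n} {b : Ext M B (k + 1)}
    (ha : IsSyzygyClass a) (hb : IsCosyzygyClass b) {α : Ext A T n} {β : Ext T B (k + 1)}
    (h : α.comp β rfl = a.comp b rfl) :
    ∃ (φ : M ⟶ T) (ψ : T ⟶ M) (P : C) (f : M ⟶ P) (g : P ⟶ M),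
      Projective P ∧ φ ≫ ψ + f ≫ g = 𝟙 M := by
  obtain ⟨φ, rfl⟩ := ha.exists_comp_mk₀ α
  obtain ⟨ψ, rfl⟩ := hb.exists_mk₀_comp β
  have comp_sub_eq_zero : a.comp ((Ext.mk₀ (𝟙 M - φ ≫ ψ)).comp b (zero_add _)) rfl = 0 := by
    rw [sub_eq_add_neg, Ext.mk₀_add, Ext.mk₀_neg, Ext.add_comp, Ext.neg_comp, Ext.mk₀_id_comp,
      Ext.comp_add, Ext.comp_neg, ← Ext.mk₀_comp_mk₀_assoc, ← Ext.comp_assoc_of_second_deg_zero, h,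
      add_neg_cancel]
  obtain ⟨P, f, g, hP, hfg⟩ := hb.exists_projective_of_mk₀_comp_eq_zero _
    (ha.eq_zero_of_comp_eq_zero _ rfl comp_sub_eq_zero)
  exact ⟨φ, ψ, P, f, g, hP, by rw [hfg, add_sub_cancel]⟩

section Existence

variable {P : C → Prop}

lemma exists_isSyzygyClass
    (hP : ∀ M, P M → ∃ S : ShortComplex C, S.ShortExact ∧ S.X₁ = M ∧ Projective S.X₂ ∧ P S.X₃)
    {M : C} (hM : P M) (n : ℕ) : ∃ A, P A ∧ ∃ a : Ext A M n, IsSyzygyClass a := by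
  induction n generalizing M with
  | zero => exact ⟨M, hM, _, isSyzygyClass_mk₀_id M⟩
  | succ n ih =>
    obtain ⟨A, hA, a, ha⟩ := ih hM
    obtain ⟨S, hS, rfl, _, hS₃⟩ := hP A hA
    exact ⟨S.X₃, hS₃, _, ha.extClass_comp hS⟩

lemma exists_isCosyzygyClass
    (hP : ∀ M, P M → ∃ S : ShortComplex C, S.ShortExact ∧ S.X₃ = M ∧ Projective S.X₂ ∧
      Injective S.X₂ ∧ P S.X₁)
    {M : C} (hM : P M) (n : ℕ) : ∃ B, P B ∧ ∃ b : Ext M B (n + 1), IsCosyzygyClass b := by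
  induction n with
  | zero =>
    obtain ⟨S, hS, rfl, _, _, hS₁⟩ := hP M hM
    exact ⟨S.X₁, hS₁, _, isCosyzygyClass_extClass hS⟩
  | succ n ih =>
    obtain ⟨B, hB, b, hb⟩ := ih
    obtain ⟨S, hS, rfl, _, _, hS₁⟩ := hP B hB
    exact ⟨S.X₁, hS₁, _, hb.comp_extClass hS⟩

end Existence

end SyzygyClass

section Modules

variable {R : Type*} [Ring R] {S T : Type*} [AddCommGroup S] [Module R S] [AddCommGroup T]
  [Module R T]

lemma exists_isCompl_of_projective_quotient (N : Submodule R T)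
    [Module.Projective R (T ⧸ N)] : ∃ N', IsCompl N N' := by
  obtain ⟨s, hs⟩ := N.mkQ.exists_rightInverse_of_surjective N.range_mkQ
  have isIdempotentElem : IsIdempotentElem (s ∘ₗ N.mkQ) := by
    rw [IsIdempotentElem, Module.End.mul_eq_comp, LinearMap.comp_assoc,
      ← LinearMap.comp_assoc N.mkQ, hs, LinearMap.id_comp]
  have ker_eq : LinearMap.ker (s ∘ₗ N.mkQ) = N := by
    rw [LinearMap.ker_comp_of_ker_eq_bot _ (LinearMap.ker_eq_bot_of_inverse hs), N.ker_mkQ]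
  exact ⟨_, ker_eq ▸ (LinearMap.IsIdempotentElem.isCompl isIdempotentElem).symm⟩

lemma isSemisimpleRing_of_forall_projective
    (h : ∀ m : Ideal R, IsSimpleModule R (R ⧸ m) → Module.Projective R (R ⧸ m)) :
    IsSemisimpleRing R := by
  refine IsSemisimpleModule.of_sSup_simples_eq_top ?_
  by_contra socle_ne_top
  obtain ⟨m, hm, socle_le⟩ := (eq_top_or_exists_le_coatom _).resolve_left socle_ne_top
  have := h m (isSimpleModule_iff_isCoatom.2 hm)
  obtain ⟨N, hN⟩ := exists_isCompl_of_projective_quotient m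
  have N_isAtom : IsAtom N := hN.symm.isAtom_iff_isCoatom.2 hm
  have N_le : N ≤ m := le_trans (le_sSup (isSimpleModule_iff_isAtom.2 N_isAtom :)) socle_le
  exact N_isAtom.1 (hN.symm.disjoint.eq_bot_of_le N_le)

lemma comp_eq_zero_of_not_projective [IsSimpleModule R S] (hS : ¬ Module.Projective R S)
    [Module.Projective R T] (f : S →ₗ[R] T) (g : T →ₗ[R] S) : g ∘ₗ f = 0 := by
  refine (g ∘ₗ f).bijective_or_eq_zero.resolve_left fun hgf ↦ hS ?_
  refine .of_split f ((LinearEquiv.ofBijective _ hgf).symm.toLinearMap ∘ₗ g) ?_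
  ext x
  exact (LinearEquiv.ofBijective _ hgf).symm_apply_apply x

lemma comp_eq_zero_of_pi_of_not_projective [IsSimpleModule R S] (hS : ¬ Module.Projective R S)
    [Module.Projective R T] {ι : Type*} [Finite ι] (f : (ι → S) →ₗ[R] T) (g : T →ₗ[R] ι → S) :
    g ∘ₗ f = 0 := by
  classical
  refine LinearMap.pi_ext' fun i ↦ LinearMap.ext fun x ↦ funext fun j ↦ ?_
  exact LinearMap.congr_fun (comp_eq_zero_of_not_projective hS
    (f ∘ₗ LinearMap.single R (fun _ ↦ S) i) (LinearMap.proj j ∘ₗ g)) x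

lemma exists_forall_le_of_injective_pi [IsSimpleModule R S] [IsNoetherian R T] :
    ∃ N : ℕ, ∀ n (f : (Fin n → S) →ₗ[R] T), Function.Injective f → n ≤ N := by
  let D : Submodule R T := ⨆ N ∈ {N : Submodule R T | IsSemisimpleModule R N}, id N
  have : IsSemisimpleModule R D :=
    isSemisimpleModule_biSup_of_isSemisimpleModule_submodule (p := id) fun _ hN ↦ hN
  have D_length : Module.length R D ≠ ⊤ := Module.length_ne_top
  obtain ⟨N, hN⟩ := ENat.ne_top_iff_exists.1 D_length
  refine ⟨N, fun n f hf ↦ ?_⟩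
  have range_le : LinearMap.range f ≤ D := le_biSup id (Set.mem_ofPred.2 (.range f))
  have length_le : Module.length R (Fin n → S) ≤ Module.length R D :=
    Module.length_le_of_injective (f.codRestrict D fun x ↦ range_le ⟨x, rfl⟩)
      (LinearMap.injective_codRestrict_iff _ |>.2 hf)
  rw [Module.length_pi_of_fintype, ← hN] at length_le
  simpa [Module.length_eq_one] using length_le

lemma exists_injective_finset_finsupp [Module.Finite R S] {ι : Type*} {f : S →ₗ[R] ι →₀ R}
    (hf : Function.Injective f) :
    ∃ (s : Finset ι) (g : S →ₗ[R] s →₀ R), Function.Injective g := by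
  classical
  obtain ⟨G, hG⟩ := Module.Finite.fg_top (R := R) (M := S)
  let s : Finset ι := G.biUnion fun x ↦ (f x).support
  have mem_supported (x : S) : f x ∈ Finsupp.supported R R (s : Set ι) := by
    suffices ⊤ ≤ (Finsupp.supported R R (s : Set ι)).comap f from this trivial
    rw [← hG, Submodule.span_le]
    intro y hy
    exact_mod_cast Finset.subset_biUnion_of_mem (fun x ↦ (f x).support) hy
  let e := Finsupp.supportedEquivFinsupp (M := R) (R := R) (s : Set ι)
  exact ⟨s, e.toLinearMap ∘ₗ f.codRestrict _ mem_supported,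
    e.injective.comp ((LinearMap.injective_codRestrict_iff mem_supported).2 hf)⟩

end Modules

section QuasiFrobenius

universe u

variable {R : Type u} [Ring R]

open Abelian

lemma exists_shortExact_X₃_eq_of_finite [IsNoetherianRing R] (M : ModuleCat.{u} R)
    [Module.Finite R M] :
    ∃ S : ShortComplex (ModuleCat.{u} R), S.ShortExact ∧ S.X₃ = M ∧ Projective S.X₂ ∧
      Module.Finite R S.X₁ := by
  obtain ⟨n, f, hf⟩ := Module.Finite.exists_fin' R M
  exact ⟨f.shortComplexKer, LinearMap.shortExact_shortComplexKer hf, rfl,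
    (IsProjective.iff_projective (R := R) (Fin n → R)).1 inferInstance,
    inferInstanceAs (Module.Finite R f.ker)⟩

lemma exists_injective_finsupp
    (hproj : ∀ M : ModuleCat.{u} R, Module.Injective R M → Module.Projective R M)
    (M : ModuleCat.{u} R) :
    ∃ (ι : Type u) (f : M →ₗ[R] ι →₀ R), Function.Injective f := by
  let I : ModuleCat.{u} R := Injective.under M
  have : Injective (ModuleCat.of R I) := Injective.injective_under M
  obtain ⟨s, hs⟩ :=
    Module.projective_def.1 (hproj I (Module.injective_module_of_injective_object R I))
  exact ⟨I, s ∘ₗ (Injective.ι M).hom,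
    hs.injective.comp ((ModuleCat.mono_iff_injective _).1 inferInstance)⟩

lemma exists_shortExact_X₁_eq_of_finite
    (hproj : ∀ M : ModuleCat.{u} R, Module.Injective R M → Module.Projective R M)
    (M : ModuleCat.{u} R) [Module.Finite R M] :
    ∃ S : ShortComplex (ModuleCat.{u} R), S.ShortExact ∧ S.X₁ = M ∧ Projective S.X₂ ∧
      Module.Finite R S.X₃ := by
  obtain ⟨ι, f, hf⟩ := exists_injective_finsupp hproj M
  obtain ⟨s, g, hg⟩ := exists_injective_finset_finsupp hf
  have isExact : Function.Exact g g.range.mkQ := LinearMap.exact_map_mkQ_range g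
  exact ⟨ModuleCat.shortComplexOfCompEqZero g g.range.mkQ isExact.linearMap_comp_eq_zero,
    ModuleCat.shortComplex_shortExact _ isExact hg g.range.mkQ_surjective, rfl,
    (IsProjective.iff_projective (R := R) (s →₀ R)).1 inferInstance,
    inferInstanceAs (Module.Finite R ((s →₀ R) ⧸ g.range))⟩

lemma injective_of_comp_add_comp_eq_id {S T P : Type*} [AddCommGroup S] [Module R S]
    [IsSimpleModule R S] (hS : ¬ Module.Projective R S) [AddCommGroup T] [Module R T]
    [AddCommGroup P] [Module R P] [Module.Projective R P] {ι : Type*} [Finite ι]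
    {φ : (ι → S) →ₗ[R] T} {ψ : T →ₗ[R] ι → S} {f : (ι → S) →ₗ[R] P} {g : P →ₗ[R] ι → S}
    (h : ψ ∘ₗ φ + g ∘ₗ f = LinearMap.id) : Function.Injective φ := by
  rw [comp_eq_zero_of_pi_of_not_projective hS f g, add_zero] at h
  exact Function.LeftInverse.injective (LinearMap.congr_fun h)

lemma exists_finite_isSyzygyClass [HasExt (ModuleCat.{u} R)]
    (hproj : ∀ M : ModuleCat.{u} R, Module.Injective R M → Module.Projective R M)
    (M : ModuleCat.{u} R) [hM : Module.Finite R M] (n : ℕ) :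
    ∃ A : ModuleCat.{u} R, Module.Finite R A ∧ ∃ a : Ext A M n, IsSyzygyClass a :=
  exists_isSyzygyClass (P := fun M : ModuleCat.{u} R ↦ Module.Finite R M)
    (fun M _ ↦ exists_shortExact_X₁_eq_of_finite hproj M) hM n

lemma exists_finite_isCosyzygyClass [IsNoetherianRing R] [HasExt (ModuleCat.{u} R)]
    (hinj : ∀ M : ModuleCat.{u} R, Module.Projective R M → Module.Injective R M)
    (M : ModuleCat.{u} R) [hM : Module.Finite R M] (n : ℕ) :
    ∃ B : ModuleCat.{u} R, Module.Finite R B ∧ ∃ b : Ext M B (n + 1), IsCosyzygyClass b := by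
  refine exists_isCosyzygyClass (P := fun M : ModuleCat.{u} R ↦ Module.Finite R M)
    (fun M _ ↦ ?_) hM n
  obtain ⟨S, hS, h₃, hS₂, h₁⟩ := exists_shortExact_X₃_eq_of_finite M
  have : Module.Injective R S.X₂ := hinj _ ((IsProjective.iff_projective _).2 hS₂)
  exact ⟨S, hS, h₃, hS₂, Module.injective_object_of_injective_module R S.X₂, h₁⟩

lemma exists_ext_forall_comp_eq_injective [IsNoetherianRing R] [HasExt (ModuleCat.{u} R)]
    (hQF : ∀ M : ModuleCat.{u} R, Module.Injective R M ↔ Module.Projective R M)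
    {S : Type u} [AddCommGroup S] [Module R S] [IsSimpleModule R S]
    (hS : ¬ Module.Projective R S) (n : ℕ) :
    ∃ A B : ModuleCat.{u} R, Module.Finite R A ∧ Module.Finite R B ∧ ∃ e : Ext A B (n + n),
      ∀ (T : ModuleCat.{u} R) (α : Ext A T n) (β : Ext T B n), α.comp β rfl = e →
        ∃ f : (Fin n → S) →ₗ[R] T, Function.Injective f := by
  rcases n with _ | n
  · have : Module.Finite R (ModuleCat.of R PUnit.{u + 1}) :=
      inferInstanceAs (Module.Finite R PUnit.{u + 1})
    exact ⟨_, _, this, this, 0, fun _ _ _ _ ↦ ⟨0, Function.injective_of_subsingleton _⟩⟩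
  let M : ModuleCat.{u} R := .of R (Fin (n + 1) → S)
  have : Module.Finite R M := inferInstanceAs (Module.Finite R (Fin (n + 1) → S))
  obtain ⟨A, hA, a, ha⟩ := exists_finite_isSyzygyClass (fun M ↦ (hQF M).1) M (n + 1)
  obtain ⟨B, hB, b, hb⟩ := exists_finite_isCosyzygyClass (fun M ↦ (hQF M).2) M n
  refine ⟨A, B, hA, hB, a.comp b rfl, fun T α β h ↦ ?_⟩
  obtain ⟨φ, ψ, P, f, g, hP, hfg⟩ := ha.exists_projective_of_comp_eq hb h
  have : Module.Projective R P := (IsProjective.iff_projective _).2 hP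
  exact ⟨φ.hom, injective_of_comp_add_comp_eq_id hS (congrArg ModuleCat.Hom.hom hfg)⟩

lemma subsingleton_ext_of_isSemisimpleRing [IsSemisimpleRing R] [HasExt (ModuleCat.{u} R)]
    (M N : ModuleCat.{u} R) (n : ℕ) : Subsingleton (Ext M N (n + 1)) := by
  have : Projective M :=
    (IsProjective.iff_projective (R := R) M).1 (Module.projective_of_isSemisimpleRing R M)
  exact Ext.subsingleton_of_projective M N n

theorem stmt_3_general [IsNoetherianRing R]
    (hQF : ∀ M : ModuleCat.{u} R, Module.Injective R M ↔ Module.Projective R M)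
    (hR : ¬ IsSemisimpleRing R) {𝒰 : Type*} [Category* 𝒰] [Abelian 𝒰]
    (ι : 𝒰 ⥤ ModuleCat.{u} R) [ι.PreservesZeroMorphisms]
    (hima : ∀ X : 𝒰, Module.Finite R (ι.obj X))
    (himb : ∀ M : ModuleCat.{u} R, Module.Finite R M → ∃ X : 𝒰, Nonempty (ι.obj X ≅ M))
    [HasDerivedCategory 𝒰] [HasDerivedCategory (ModuleCat.{u} R)]
    (F : DerivedCategory 𝒰 ⥤ DerivedCategory (ModuleCat.{u} R))
    (hF : ι.mapHomologicalComplex (ComplexShape.up ℤ) ⋙ DerivedCategory.Q ≅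
      DerivedCategory.Q ⋙ F) :
    ¬ F.Full := by
  intro _
  have := HasExt.standard (ModuleCat.{u} R)
  obtain ⟨m, _, hm⟩ :
      ∃ m : Ideal R, IsSimpleModule R (R ⧸ m) ∧ ¬ Module.Projective R (R ⧸ m) := by
    by_contra! h
    exact hR (isSemisimpleRing_of_forall_projective h)
  choose A B hA hB e embeds using exists_ext_forall_comp_eq_injective hQF hm
  choose X i using fun n ↦ himb (A n) (hA n)
  choose Y j using fun n ↦ himb (B n) (hB n)
  choose ξ hξ using fun n ↦ exists_ext_forall_comp_eq_of_iso (i n).some (j n).some (e n)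
  obtain ⟨U, T, π, _, factors⟩ := exists_comp_eq_of_full ι F hF ξ
  have := hima U
  have : Module.Finite R T :=
    .of_surjective π.hom ((ModuleCat.epi_iff_surjective π).1 inferInstance)
  obtain ⟨N, hN⟩ := exists_forall_le_of_injective_pi (R := R) (S := R ⧸ m) (T := T)
  obtain ⟨α, β, h⟩ := factors (N + 1)
  obtain ⟨α', β', h'⟩ := hξ (N + 1) T α β h
  obtain ⟨f, hf⟩ := embeds (N + 1) T α' β' h'
  exact (hN _ f hf).not_gt N.lt_succ_self

end QuasiFrobenius

/-- Let `R` be a quasi-Frobenius ring (left noetherian and such that a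
module is injective iff it is projective) of infinite global dimension (for every `n`
some `Ext^{n+1}` group is nonzero). Then the canonical triangulated functor
`D(mod R) ⥤ D(Mod R)` is not full.  Here `mod R` is formalized as any abelian category
`𝒰` with a fully faithful exact functor `ι` to `ModuleCat R` whose essential image
consists exactly of the finitely generated modules, and the canonical functor as any
`F` compatible with `ι` via the localization functors `Q`. -/
theorem stmt_3 {R : Type} [Ring R] [IsNoetherianRing R]
    (hQF : ∀ M : ModuleCat.{0} R, Module.Injective R M ↔ Module.Projective R M)
    [HasExt.{0} (ModuleCat.{0} R)]
    (hgl : ∀ n : ℕ, ∃ M N : ModuleCat.{0} R, ¬ Subsingleton (Abelian.Ext M N (n + 1)))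
    {𝒰 : Type u₁} [Category.{v₁} 𝒰] [Abelian 𝒰]
    (ι : 𝒰 ⥤ ModuleCat.{0} R) [ι.Full] [ι.Faithful] [ι.Additive]
    [PreservesFiniteLimits ι] [PreservesFiniteColimits ι]
    (hima : ∀ X : 𝒰, Module.Finite R (ι.obj X))
    (himb : ∀ M : ModuleCat.{0} R, Module.Finite R M →
      ∃ X : 𝒰, Nonempty (ι.obj X ≅ M))
    [HasDerivedCategory 𝒰] [HasDerivedCategory (ModuleCat.{0} R)]
    (F : DerivedCategory 𝒰 ⥤ DerivedCategory (ModuleCat.{0} R))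
    (hF : (ι.mapHomologicalComplex (ComplexShape.up ℤ) ⋙ DerivedCategory.Q) ≅
      (DerivedCategory.Q ⋙ F)) :
    ¬ F.Full := by
  obtain ⟨M, N, hMN⟩ := hgl 0
  exact stmt_3_general hQF (fun _ ↦ hMN (subsingleton_ext_of_isSemisimpleRing M N 0)) ι hima himb
    F hF
end

section
/- Let A be an abelian category with enough projectives and finite global dimension d. If C is an acyclic cochain complex in A all of whose components are projective, then C is contractible (i.e., zero in the homotopy category K(A)). -/
open CategoryTheory CategoryTheory.Limits

/-!
In an acyclic complex `K`, the sequences `0 ⟶ Z i ⟶ K.X i ⟶ Z (i + 1) ⟶ 0` are short exact. When the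
components are projective, the long exact `Ext` sequence shows that `Ext^{n+1}(Z i, Y)` vanishes as
soon as `Ext^{n+2}(Z (i + 1), Y)` does. Starting from `Ext^{d+1} = 0` and descending to `Ext^1 = 0`,
one finds that all the cycles are projective. The epimorphisms `K.X i ⟶ Z (i + 1)` then admit
sections, and these assemble into a contracting homotopy.
-/

section Cycles

variable {A : Type*} [Category* A] [Preadditive A] {ι : Type*} {c : ComplexShape ι}
  (K : HomologicalComplex A c) {i j : ι} [K.HasHomology j]

lemma iCycles_toCycles [K.HasHomology i] : K.iCycles i ≫ K.toCycles i j = 0 := by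
  simp only [← cancel_mono (K.iCycles j), Category.assoc, K.toCycles_i, K.iCycles_d, zero_comp]

lemma epi_toCycles_of_exactAt (hij : c.prev j = i) (hj : K.ExactAt j) : Epi (K.toCycles i j) := by
  subst hij
  exact ShortComplex.Exact.epi_toCycles hj

variable {K} in
lemma toCycles_section_toCycles {s : K.cycles j ⟶ K.X i}
    (hs : c.prev j = i → s ≫ K.toCycles i j = 𝟙 (K.cycles j)) :
    K.toCycles i j ≫ s ≫ K.toCycles i j = K.toCycles i j := by
  by_cases hij : c.Rel i j
  · rw [hs (c.prev_eq' hij), Category.comp_id]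
  · rw [K.toCycles_eq_zero hij, zero_comp]

end Cycles

section Contraction

variable {A : Type*} [Category* A] [Preadditive A] {ι : Type*} {c : ComplexShape ι}
  {K : HomologicalComplex A c} [∀ i, K.HasHomology i] (s : ∀ i j, K.cycles j ⟶ K.X i)
  (hs : ∀ i j, c.prev j = i → s i j ≫ K.toCycles i j = 𝟙 (K.cycles j))

/-- The projection of `K.X i` onto its cycles which is complementary to the idempotent
`K.toCycles i (c.next i) ≫ s i (c.next i)`. -/
noncomputable def cyclesRetraction (i : ι) : K.X i ⟶ K.cycles i :=
  K.liftCycles (𝟙 (K.X i) - K.toCycles i (c.next i) ≫ s i (c.next i)) (c.next i) rfl (by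
    rw [← K.toCycles_i, Preadditive.sub_comp, Category.id_comp, sub_eq_zero]
    simpa only [Category.assoc] using
      (toCycles_section_toCycles (hs i (c.next i)) =≫ K.iCycles (c.next i)).symm)

lemma cyclesRetraction_iCycles (i : ι) :
    cyclesRetraction s hs i ≫ K.iCycles i =
      𝟙 (K.X i) - K.toCycles i (c.next i) ≫ s i (c.next i) :=
  K.liftCycles_i _ _ _ _

lemma iCycles_cyclesRetraction (i : ι) :
    K.iCycles i ≫ cyclesRetraction s hs i = 𝟙 (K.cycles i) := by
  rw [← cancel_mono (K.iCycles i), Category.assoc, cyclesRetraction_iCycles, Preadditive.comp_sub,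
    reassoc_of% (iCycles_toCycles K), zero_comp, sub_zero, Category.comp_id, Category.id_comp]

open Classical in
/-- The contracting homotopy of `K` determined by sections of the maps `K.X i ⟶ K.cycles j`. The
sections are requested at `i = c.prev j`, even if `c.Rel i j` fails: then `K.toCycles i j = 0`, and
the condition says that `K.cycles j` vanishes. -/
noncomputable def contractingHomotopyOfSections : Homotopy (𝟙 K) 0 where
  hom j i := if c.Rel i j then cyclesRetraction s hs j ≫ s i j else 0
  zero _ _ hij := if_neg hij
  comm i := by
    have d_hom : dNext i (fun j i => if c.Rel i j then cyclesRetraction s hs j ≫ s i j else 0) =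
        K.toCycles i (c.next i) ≫ s i (c.next i) := by
      by_cases hi : c.Rel i (c.next i)
      · rw [dNext_eq _ hi, if_pos hi, ← K.toCycles_i, Category.assoc,
          reassoc_of% (iCycles_cyclesRetraction s hs)]
      · rw [dNext_eq_zero _ _ hi, K.toCycles_eq_zero hi, zero_comp]
    have hom_d : prevD i (fun j i => if c.Rel i j then cyclesRetraction s hs j ≫ s i j else 0) =
        cyclesRetraction s hs i ≫ K.iCycles i := by
      have section_d : s (c.prev i) i ≫ K.d (c.prev i) i = K.iCycles i := by
        rw [← K.toCycles_i, reassoc_of% (hs _ i rfl)]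
      by_cases hi : c.Rel (c.prev i) i
      · rw [prevD_eq _ hi, if_pos hi, Category.assoc, section_d]
      · rw [prevD_eq_zero _ _ hi, ← section_d, K.shape _ _ hi, comp_zero, comp_zero]
    rw [d_hom, hom_d, cyclesRetraction_iCycles]
    simp

end Contraction

section Abelian

variable {A : Type*} [Category* A] [Abelian A] {ι : Type*} {c : ComplexShape ι}
  (K : HomologicalComplex A c)

theorem nonempty_homotopy_id_zero_of_projective_cycles (hac : K.Acyclic)
    (hZ : ∀ i, Projective (K.cycles i)) : Nonempty (Homotopy (𝟙 K) 0) := by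
  have exists_section (i j : ι) :
      ∃ s : K.cycles j ⟶ K.X i, c.prev j = i → s ≫ K.toCycles i j = 𝟙 (K.cycles j) := by
    by_cases hij : c.prev j = i
    · have := epi_toCycles_of_exactAt K hij (hac j)
      exact ⟨Projective.factorThru (𝟙 _) (K.toCycles i j), fun _ => Projective.factorThru_comp _ _⟩
    · exact ⟨0, fun h => absurd h hij⟩
  choose s hs using exists_section
  exact ⟨contractingHomotopyOfSections s hs⟩

lemma shortExact_iCycles_toCycles {i j : ι} (hij : c.Rel i j) (hj : K.ExactAt j) :
    (ShortComplex.mk (K.iCycles i) (K.toCycles i j) (iCycles_toCycles K)).ShortExact where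
  exact := ShortComplex.exact_of_f_is_kernel _ <|
    isKernelOfComp _ _ (K.cyclesIsKernel i j (c.next_eq' hij)) _ (K.toCycles_i i j)
  mono_f := inferInstanceAs (Mono (K.iCycles i))
  epi_g := epi_toCycles_of_exactAt K (c.prev_eq' hij) hj

variable [HasExt.{w} A]

lemma subsingleton_ext_X₁_of_shortExact {S : ShortComplex A} (hS : S.ShortExact) (Y : A) (n : ℕ)
    (h₂ : Subsingleton (Abelian.Ext S.X₂ Y n))
    (h₃ : Subsingleton (Abelian.Ext S.X₃ Y (n + 1))) :
    Subsingleton (Abelian.Ext S.X₁ Y n) := by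
  refine subsingleton_of_forall_eq 0 fun x₁ => ?_
  obtain ⟨x₂, rfl⟩ := Abelian.Ext.contravariant_sequence_exact₁ hS Y x₁ (add_comm 1 n)
    (Subsingleton.elim _ _)
  rw [Subsingleton.elim x₂ 0, Abelian.Ext.comp_zero]

lemma subsingleton_ext_cycles_of_next (i : ι) [Projective (K.X i)] (hac : K.ExactAt (c.next i))
    (Y : A) (n : ℕ) (hZ : Subsingleton (Abelian.Ext (K.cycles (c.next i)) Y (n + 2))) :
    Subsingleton (Abelian.Ext (K.cycles i) Y (n + 1)) := by
  by_cases hi : c.Rel i (c.next i)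
  · exact subsingleton_ext_X₁_of_shortExact (shortExact_iCycles_toCycles K hi hac) Y (n + 1)
      (Abelian.Ext.subsingleton_of_projective (K.X i) Y n) hZ
  · have : Projective (K.cycles i) :=
      Projective.of_iso (K.iCyclesIso i _ rfl (K.shape _ _ hi)).symm inferInstance
    exact Abelian.Ext.subsingleton_of_projective _ Y n

lemma projective_cycles_of_subsingleton_ext (d : ℕ) (hproj : ∀ i, Projective (K.X i))
    (hac : K.Acyclic) (hZ : ∀ i Y, Subsingleton (Abelian.Ext (K.cycles i) Y (d + 1))) (i : ι) :
    Projective (K.cycles i) := by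
  induction d with
  | zero => exact projective_iff_subsingleton_ext_one.2 fun Y => hZ i Y
  | succ d ih => exact ih fun i Y => subsingleton_ext_cycles_of_next K i (hac _) Y d (hZ _ Y)

theorem stmt_4_general (d : ℕ) (hproj : ∀ i, Projective (K.X i)) (hac : K.Acyclic)
    (hZ : ∀ i Y, Subsingleton (Abelian.Ext (K.cycles i) Y (d + 1))) :
    Nonempty (Homotopy (𝟙 K) 0) :=
  nonempty_homotopy_id_zero_of_projective_cycles K hac
    (projective_cycles_of_subsingleton_ext K d hproj hac hZ)

end Abelian

/-- In an abelian category with enough projectives and finite global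
dimension `d` (i.e. `Ext^{d+1}` vanishes identically), every acyclic cochain complex
all of whose components are projective is contractible. -/
theorem stmt_4 {A : Type u} [Category.{v} A] [Abelian A] [EnoughProjectives A]
    [HasExt.{w} A] (d : ℕ)
    (hgl : ∀ X Y : A, Subsingleton (Abelian.Ext X Y (d + 1)))
    (C : CochainComplex A ℤ) (hproj : ∀ n, Projective (C.X n))
    (hac : ∀ n, C.ExactAt n) :
    Nonempty (Homotopy (𝟙 C) 0) :=
  stmt_4_general C d hproj hac fun n => hgl (C.cycles n)
end

section
/- Let A be an abelian category of finite global dimension with enough projectives. Then every cochain complex in A with projective components is h-projective, i.e., any chain map from it to an acyclic complex is null-homotopic. -/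
open CategoryTheory CategoryTheory.Limits

/-!
Let `C` be a complex of projectives and `X` an acyclic complex whose cycles have projective
dimension at most `k`. If `k = 0`, the short exact sequences `Zⁱ ⟶ Xⁱ ⟶ Zⁱ⁺¹` split, so `X` is
contractible and `Hom(C, X)` is acyclic. In general, `X` is a quotient of a contractible complex `P`
of projectives. The kernel `K` of `P ⟶ X` is acyclic and its cycles are syzygies of those of `X`, so
`Hom(C, K)` is acyclic by induction on `k`, and `Hom(C, P)` is acyclic because `P` is contractible.
Since `C` is degreewise projective, `0 ⟶ Hom(C, K) ⟶ Hom(C, P) ⟶ Hom(C, X) ⟶ 0` is exact, so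
`Hom(C, X)` is acyclic too. Finite global dimension bounds the projective dimension of all cycles.
-/

section

open HomologicalComplex CochainComplex HomComplex

lemma hasProjectiveDimensionLT_of_enoughProjectives {A : Type*} [Category* A] [Abelian A]
    [HasExt.{w} A] [EnoughProjectives A] (X : A) (n : ℕ)
    (hX : ∀ Y : A, Subsingleton (Abelian.Ext X Y n)) : HasProjectiveDimensionLT X n := by
  induction n generalizing X with
  | zero =>
    have isZero_X : IsZero X :=
      (IsZero.iff_id_eq_zero X).2 (Abelian.Ext.homEquiv₀.symm.injective ((hX X).elim _ _))
    exact isZero_X.hasProjectiveDimensionLT_zero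
  | succ n ih =>
    obtain _ | n := n
    · exact projective_iff_hasProjectiveDimensionLT_one.1 (projective_iff_subsingleton_ext_one.2 hX)
    have syzygy : (ShortComplex.mk _ _ (kernel.condition (Projective.π X))).ShortExact :=
      { exact := ShortComplex.exact_kernel _ }
    refine syzygy.hasProjectiveDimensionLT_X₃ (n + 1) (ih _ fun Y => ?_) inferInstance
    refine subsingleton_of_forall_eq 0 fun e => ?_
    obtain ⟨e', rfl⟩ := Abelian.Ext.contravariant_sequence_exact₁ syzygy Y e (add_comm _ _)
      ((hX Y).elim _ _)
    rw [e'.eq_zero_of_projective, Abelian.Ext.comp_zero]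

section Acyclic

variable {ι : Type*} {c : ComplexShape ι}

lemma quasiIso_of_acyclic {A : Type*} [Category* A] [HasZeroMorphisms A] [CategoryWithHomology A]
    {K L : HomologicalComplex A c} (f : K ⟶ L) (hK : K.Acyclic) (hL : L.Acyclic) : QuasiIso f :=
  ⟨fun i => (quasiIsoAt_iff_exactAt f i (hK i)).2 (hL i)⟩

lemma acyclic_of_homotopy_id_zero {A : Type*} [Category* A] [Preadditive A]
    [CategoryWithHomology A] {K : HomologicalComplex A c} (h : Homotopy (𝟙 K) 0) :
    K.Acyclic := by
  intro i
  rw [exactAt_iff_isZero_homology, IsZero.iff_id_eq_zero]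
  simpa using h.homologyMap_eq i

lemma projective_cycles_of_homotopy_id_zero {A : Type*} [Category* A] [Preadditive A]
    [CategoryWithHomology A] {K : HomologicalComplex A c} (h : Homotopy (𝟙 K) 0)
    {i j : ι} (hij : c.Rel i j) [Projective (K.X i)] : Projective (K.cycles j) := by
  have retraction : (K.iCycles j ≫ h.hom j i) ≫ K.toCycles i j = 𝟙 (K.cycles j) := by
    rw [← cancel_mono (K.iCycles j)]
    simpa [dNext, prevD_eq h.hom hij] using (K.iCycles j ≫= h.comm j).symm
  exact Retract.projective ⟨_, _, retraction⟩

end Acyclic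

section Cycles

variable {A : Type*} [Category* A] [Abelian A] {ι : Type*} {c : ComplexShape ι}

/-- The complex `Zᵢ ⟶ Kᵢ ⟶ Zⱼ` of cycles of `K`, meaningful when `j` is the successor of `i`. -/
noncomputable abbrev cyclesShortComplex (K : HomologicalComplex A c) (i j : ι) : ShortComplex A :=
  ShortComplex.mk (K.iCycles i) (K.toCycles i j) (by simp [← cancel_mono (K.iCycles j)])

lemma shortExact_cyclesShortComplex (K : HomologicalComplex A c) {i j : ι} (hij : c.Rel i j)
    (hK : K.ExactAt j) : (cyclesShortComplex K i j).ShortExact where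
  exact := ShortComplex.exact_of_f_is_kernel _ <|
    isKernelOfComp (K.iCycles j) (K.d i j) (K.cyclesIsKernel i j (c.next_eq' hij))
      (cyclesShortComplex K i j).zero (K.toCycles_i i j)
  epi_g := Preadditive.epi_of_isZero_cokernel' _
    (K.homologyIsCokernel i j (c.prev_eq' hij)) hK.isZero_homology

lemma shortExact_map_cyclesFunctor {S : ShortComplex (HomologicalComplex A c)} (hS : S.ShortExact)
    {i j : ι} (hij : c.Rel i j) (hS₃ : S.X₃.ExactAt j) :
    (S.map (cyclesFunctor A c j)).ShortExact := by
  have := hS.mono_f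
  have := hS.epi_g
  have : Epi (S.X₃.toCycles i j) := (shortExact_cyclesShortComplex S.X₃ hij hS₃).epi_g
  have naturality :
      S.X₂.toCycles i j ≫ cyclesMap S.g j = S.g.f i ≫ S.X₃.toCycles i j := by
    simp [← cancel_mono (S.X₃.iCycles j)]
  have : Epi (S.X₂.toCycles i j ≫ cyclesMap S.g j) := by
    rw [naturality]
    infer_instance
  exact
    { exact := cycles_left_exact S hS.exact j
      mono_f := inferInstanceAs (Mono (cyclesMap S.f j))
      epi_g := epi_of_epi (S.X₂.toCycles i j) (cyclesMap S.g j) }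

lemma nonempty_homotopy_id_zero_of_projective_cycles_s5 {X : CochainComplex A ℤ} (hX : X.Acyclic)
    (hZ : ∀ n, Projective (X.cycles n)) : Nonempty (Homotopy (𝟙 X) 0) := by
  let σ (i j : ℤ) (hij : i + 1 = j) : (cyclesShortComplex X i j).Splitting :=
    have : Projective (cyclesShortComplex X i j).X₃ := hZ j
    (shortExact_cyclesShortComplex X hij (hX j)).splittingOfProjective
  let h : Cochain X X (-1) :=
    Cochain.mk fun p q hpq => (σ p (p + 1) rfl).r ≫ (σ q p (by lia)).s
  refine ⟨(Cochain.equivHomotopy _ _).symm ⟨h, ?_⟩⟩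
  ext p
  have s_d : (σ (p - 1) p (by lia)).s ≫ X.d (p - 1) p = X.iCycles p := by
    simpa using (σ (p - 1) p (by lia)).s_g =≫ X.iCycles p
  have d_r : X.d p (p + 1) ≫ (σ (p + 1) (p + 1 + 1) rfl).r = X.toCycles p (p + 1) := by
    simpa using X.toCycles p (p + 1) ≫= (σ (p + 1) (p + 1 + 1) rfl).f_r
  have id_eq := (σ p (p + 1) rfl).id
  rw [Cochain.add_v, δ_v (-1) 0 (by lia) _ p p (add_zero p) (p - 1) (p + 1) rfl rfl]
  simpa [h, s_d, reassoc_of% d_r] using id_eq.symm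

end Cycles

lemma exists_epi_from_contractible_projective {A : Type*} [Category* A] [Abelian A]
    [EnoughProjectives A] (X : CochainComplex A ℤ) :
    ∃ (P : CochainComplex A ℤ) (p : P ⟶ X), Epi p ∧ (∀ n, Projective (P.X n)) ∧
      Nonempty (Homotopy (𝟙 P) 0) := by
  -- A morphism from the cone of `𝟙 Q` to `X` is the same as a cochain `Q ⟶ X` of degree `-1`.
  let Q : CochainComplex A ℤ :=
    { X n := Projective.over (X.X (n - 1))
      d _ _ := 0 }
  let α : Cochain Q X (-1) := Cochain.mk fun p q hpq =>
    Projective.π (X.X (p - 1)) ≫ (X.XIsoOfEq (show p - 1 = q by lia)).hom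
  have epi_α (p q : ℤ) (hpq : p + -1 = q) : Epi (α.v p q hpq) :=
    inferInstanceAs
      (Epi (Projective.π (X.X (p - 1)) ≫ (X.XIsoOfEq (show p - 1 = q by lia)).hom))
  let β : Q ⟶ X := Cocycle.homOf (Cocycle.mk (δ (-1) 0 α) 1 (zero_add 1) (δ_δ _ _ _ _))
  have hαβ : δ (-1) 0 α = Cochain.ofHom (𝟙 Q ≫ β) := by simp [β]
  have hQ (n : ℤ) : Projective (Q.X n) := Projective.projective_over _
  let p : mappingCone (𝟙 Q) ⟶ X := mappingCone.desc (𝟙 Q) α β hαβ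
  have epi_p (n : ℤ) : Epi (p.f n) := by
    have : Epi ((mappingCone.inl (𝟙 Q)).v (n + 1) n (add_neg_cancel_right n 1) ≫ p.f n) := by
      rw [mappingCone.inl_v_desc_f]
      infer_instance
    exact epi_of_epi ((mappingCone.inl (𝟙 Q)).v (n + 1) n (add_neg_cancel_right n 1)) (p.f n)
  exact ⟨mappingCone (𝟙 Q), p, epi_of_epi_f p epi_p,
    fun n => Projective.of_iso
      (homotopyCofiber.XIsoBiprod (𝟙 Q) n (n + 1) rfl).symm inferInstance,
    ⟨mappingCone.homotopyToZeroOfId Q⟩⟩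

section HomComplex

section

variable {A : Type*} [Category* A] [Preadditive A]

/-- The functor `X ↦ Hom(C, X)` on cochain complexes, acting on morphisms by postcomposition. -/
def homComplexFunctor (C : CochainComplex A ℤ) :
    CochainComplex A ℤ ⥤ CochainComplex AddCommGrpCat ℤ where
  obj X := HomComplex C X
  map f :=
    { f n := AddCommGrpCat.ofHom
        { toFun z := z.comp (Cochain.ofHom f) (add_zero n)
          map_zero' := by simp
          map_add' _ _ := Cochain.add_comp .. }
      comm' n m _ := by
        ext z
        exact δ_comp_ofHom z f m }
  map_comp {X _ _} f g := by
    ext n (z : Cochain C X n) : 3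
    have comp_comp : z.comp (Cochain.ofHom (f ≫ g)) (add_zero n) =
        (z.comp (Cochain.ofHom f) (add_zero n)).comp (Cochain.ofHom g) (add_zero n) := by
      simp
    exact comp_comp

instance (C : CochainComplex A ℤ) : (homComplexFunctor C).PreservesZeroMorphisms where
  map_zero X Y := by
    ext n (z : Cochain C X n)
    have comp_zero : z.comp (Cochain.ofHom (0 : X ⟶ Y)) (add_zero n) = 0 := by simp
    exact comp_zero

lemma exactAt_homComplex_iff {C X : CochainComplex A ℤ} (m n : ℤ) (hmn : m + 1 = n) :
    (HomComplex C X).ExactAt n ↔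
      ∀ z : Cochain C X n, δ n (n + 1) z = 0 → ∃ y : Cochain C X m, δ m n y = z := by
  rw [exactAt_iff' _ m n (n + 1) (by simp; lia) (by simp), ShortComplex.ab_exact_iff]
  rfl

lemma acyclic_homComplex_of_homotopy_id_zero (C : CochainComplex A ℤ) {X : CochainComplex A ℤ}
    (h : Homotopy (𝟙 X) 0) : (HomComplex C X).Acyclic := by
  intro n
  rw [exactAt_homComplex_iff (n - 1) n (by lia)]
  intro z hz
  refine ⟨z.comp (Cochain.ofHomotopy h) (by lia), ?_⟩
  rw [δ_comp z _ _ (n + 1) 0 n (by lia) rfl (by lia), hz, δ_ofHomotopy]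
  simp

end

variable {A : Type*} [Category* A] [Abelian A]

lemma isKProjective_of_acyclic_homComplex {C : CochainComplex A ℤ}
    (hC : ∀ X : CochainComplex A ℤ, X.Acyclic → (HomComplex C X).Acyclic) : C.IsKProjective where
  nonempty_homotopy_zero {X} f hX := by
    obtain ⟨y, hy⟩ := (exactAt_homComplex_iff (-1) 0 (by lia)).1 (hC X hX 0) (Cochain.ofHom f)
      (δ_ofHom f)
    exact ⟨(Cochain.equivHomotopy f 0).symm ⟨y, by simp [hy]⟩⟩

lemma shortExact_map_homComplexFunctor {C : CochainComplex A ℤ} (hC : ∀ n, Projective (C.X n))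
    {S : ShortComplex (CochainComplex A ℤ)} (hS : S.ShortExact) :
    (S.map (homComplexFunctor C)).ShortExact := by
  have hS' (q : ℤ) : (S.map (eval A _ q)).ShortExact := hS.map_of_exact _
  refine shortExact_of_degreewise_shortExact _ fun n => ShortComplex.ShortExact.mk' ?_ ?_ ?_
  · rw [ShortComplex.ab_exact_iff]
    intro (z : Cochain C S.X₂ n) (hz : z.comp (Cochain.ofHom S.g) (add_zero n) = 0)
    have z_comp_g (p q : ℤ) (hpq : p + n = q) : z.v p q hpq ≫ S.g.f q = 0 := by
      simpa using Cochain.congr_v hz p q hpq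
    let y : Cochain C S.X₁ n := Cochain.mk fun p q hpq =>
      (hS' q).fIsKernel.lift (KernelFork.ofι (z.v p q hpq) (z_comp_g p q hpq))
    have y_comp_f : y.comp (Cochain.ofHom S.f) (add_zero n) = z := by
      ext p q hpq
      rw [Cochain.comp_zero_cochain_v, Cochain.ofHom_v]
      exact (hS' q).fIsKernel.fac _ WalkingParallelPair.zero
    exact ⟨y, y_comp_f⟩
  · rw [AddCommGrpCat.mono_iff_injective, injective_iff_map_eq_zero]
    intro (z : Cochain C S.X₁ n) (hz : z.comp (Cochain.ofHom S.f) (add_zero n) = 0)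
    have z_eq_zero : z = 0 := by
      ext p q hpq
      have : Mono (S.f.f q) := (hS' q).mono_f
      simpa [← cancel_mono (S.f.f q)] using Cochain.congr_v hz p q hpq
    exact z_eq_zero
  · rw [AddCommGrpCat.epi_iff_surjective]
    intro (z : Cochain C S.X₃ n)
    have (q : ℤ) : Epi (S.g.f q) := (hS' q).epi_g
    let y : Cochain C S.X₂ n :=
      Cochain.mk fun p q hpq => Projective.factorThru (z.v p q hpq) (S.g.f q)
    have y_comp_g : y.comp (Cochain.ofHom S.g) (add_zero n) = z := by
      ext p q hpq
      simp [y]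
    exact ⟨y, y_comp_g⟩

lemma acyclic_homComplex_of_hasProjectiveDimensionLT_cycles [EnoughProjectives A]
    {C : CochainComplex A ℤ} (hC : ∀ n, Projective (C.X n)) (k : ℕ) {X : CochainComplex A ℤ}
    (hX : X.Acyclic) (hZ : ∀ n, HasProjectiveDimensionLT (X.cycles n) (k + 1)) :
    (HomComplex C X).Acyclic := by
  induction k generalizing X with
  | zero =>
    obtain ⟨h⟩ := nonempty_homotopy_id_zero_of_projective_cycles_s5 hX fun n =>
      projective_iff_hasProjectiveDimensionLT_one.2 (hZ n)
    exact acyclic_homComplex_of_homotopy_id_zero C h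
  | succ k ih =>
    obtain ⟨P, p, _, _, ⟨h⟩⟩ := exists_epi_from_contractible_projective X
    let S := ShortComplex.mk (kernel.ι p) p (kernel.condition p)
    have hS : S.ShortExact := { exact := ShortComplex.exact_kernel p }
    have acyclic_kernel : (kernel p).Acyclic :=
      hS.acyclic_X₁ (quasiIso_of_acyclic p (acyclic_of_homotopy_id_zero h) hX)
    have hZ_kernel (n : ℤ) : HasProjectiveDimensionLT ((kernel p).cycles n) (k + 1) := by
      have hn : (ComplexShape.up ℤ).Rel (n - 1) n := sub_add_cancel n 1
      have : Projective (P.cycles n) := projective_cycles_of_homotopy_id_zero h hn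
      have cycles_shortExact := shortExact_map_cyclesFunctor hS hn (hX n)
      exact cycles_shortExact.hasProjectiveDimensionLT_X₁ (k + 1)
        (inferInstanceAs (HasProjectiveDimensionLT (P.cycles n) (k + 1))) (hZ n)
    exact (shortExact_map_homComplexFunctor hC hS).acyclic_X₃
      (quasiIso_of_acyclic _ (ih acyclic_kernel hZ_kernel)
        (acyclic_homComplex_of_homotopy_id_zero C h))

end HomComplex

end

/-- In an abelian category with enough projectives and finite global
dimension, every cochain complex with projective components is h-projective: every
chain map from it to an acyclic complex is null-homotopic. -/
theorem stmt_5 {A : Type u} [Category.{v} A] [Abelian A] [EnoughProjectives A]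
    [HasExt.{w} A] (d : ℕ)
    (hgl : ∀ X Y : A, Subsingleton (Abelian.Ext X Y (d + 1)))
    (C : CochainComplex A ℤ) (hproj : ∀ n, Projective (C.X n)) :
    ∀ (X : CochainComplex A ℤ), (∀ n, X.ExactAt n) →
      ∀ f : C ⟶ X, Nonempty (Homotopy f 0) := by
  have hpd (Y : A) : HasProjectiveDimensionLT Y (d + 1) :=
    hasProjectiveDimensionLT_of_enoughProjectives Y (d + 1) (hgl Y)
  have hC : C.IsKProjective := isKProjective_of_acyclic_homComplex fun X hX =>
    acyclic_homComplex_of_hasProjectiveDimensionLT_cycles hproj d hX fun n => hpd (X.cycles n)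
  exact fun X hX f => CochainComplex.IsKProjective.nonempty_homotopy_zero f hX
end
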